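/- Let f be a nonconstant entire function with hyper-order ρ₂(f) < 1 and let k ≥ 1 be an integer. If f and f^{(k)} share a finite value a CM (i.e., f − a and f^{(k)} − a have the same zeros with the same multiplicities), then f^{(k)} − a = c(f − a) for some nonzero constant c. -/

import Mathlib

open Filter ENNReal

/-- `log⁺ x = log (max 1 x)`. -/
noncomputable def logPlus (x : ℝ) : ℝ := Real.log (max 1 x)

/-- Maximum modulus `M(r, f)` of `f` on the circle `|z| = r`. -/
noncomputable def maxMod (f : ℂ → ℂ) (r : ℝ) : ℝ :=
  sSup ((fun z => ‖f z‖) '' Metric.sphere (0:ℂ) r)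

/-- The hyper-order `ρ₂(f) = limsup_{r→∞} log⁺ log⁺ log⁺ M(r,f) / log r` of an entire
function. -/
noncomputable def hyperOrder (f : ℂ → ℂ) : ℝ≥0∞ :=
  Filter.limsup (fun r : ℝ =>
    ENNReal.ofReal (logPlus (logPlus (logPlus (maxMod f r))) / Real.log r)) Filter.atTop

/-- `g` vanishes at `z` to order exactly `n`. -/
def VanishesToOrder (g : ℂ → ℂ) (z : ℂ) (n : ℕ) : Prop :=
  (∀ m : ℕ, m < n → iteratedDeriv m g z = 0) ∧ iteratedDeriv n g z ≠ 0

section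

open Metric Set

/-- If `φ⁽ᵏ⁾ = g φ + e` on a disc where `g` is large, then `φ` must grow by a factor `exp N`
somewhere in the disc, as soon as `φ` dominates the inhomogeneity at the centre. -/
theorem exists_exp_mul_norm_le_of_iteratedDeriv_eq {φ g e : ℂ → ℂ} (hφ : Differentiable ℂ φ)
    {k N : ℕ} {p : ℂ} {ϱ G E : ℝ} (hϱ : 0 < ϱ) (hN : 0 < N)
    (hode : ∀ z ∈ closedBall p ϱ, iteratedDeriv k φ z = g z * φ z + e z)
    (hg : ∀ z ∈ closedBall p ϱ, G ≤ ‖g z‖) (he : ∀ z ∈ closedBall p ϱ, ‖e z‖ ≤ E)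
    (hG : 6 * k.factorial * (N / ϱ) ^ k ≤ G) (hp : 2 * E ≤ G * ‖φ p‖) :
    ∃ q ∈ closedBall p ϱ, Real.exp N * ‖φ p‖ ≤ ‖φ q‖ := by
  have hNR : (0:ℝ) < N := by exact_mod_cast hN
  have hG0 : 0 < G := lt_of_lt_of_le (by positivity) hG
  rcases (norm_nonneg (φ p)).eq_or_lt with hp0 | hp0
  · exact ⟨p, mem_closedBall_self hϱ.le, by rw [← hp0, mul_zero]⟩
  have key : ∀ j : ℕ, j ≤ N → ∃ q, dist q p ≤ j * (ϱ / N) ∧ Real.exp j * ‖φ p‖ ≤ ‖φ q‖ := by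
    intro j
    induction j with
    | zero => intro _; exact ⟨p, by simp, by simp⟩
    | succ j ih =>
      intro hj
      obtain ⟨q, hq, hqe⟩ := ih (by omega)
      have hjN : ((j:ℝ) + 1) ≤ N := by exact_mod_cast hj
      have hsum : (j:ℝ) * (ϱ / N) + ϱ / N ≤ ϱ := by
        have : ((j:ℝ) + 1) * (ϱ / N) ≤ N * (ϱ / N) := by gcongr
        have h2 : N * (ϱ / N) = ϱ := by field_simp
        linarith
      have hη : 0 < ϱ / N := by positivity
      have hqmem : q ∈ closedBall p ϱ := by rw [mem_closedBall]; linarith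
      have hpq : ‖φ p‖ ≤ ‖φ q‖ := by
        have : (1:ℝ) ≤ Real.exp j := Real.one_le_exp (by positivity)
        nlinarith [norm_nonneg (φ p)]
      have hlow : G / 2 * ‖φ q‖ ≤ ‖iteratedDeriv k φ q‖ := by
        rw [hode q hqmem]
        have h1 : ‖g q * φ q‖ - ‖e q‖ ≤ ‖g q * φ q + e q‖ := by
          have := norm_sub_norm_le (g q * φ q) (-e q)
          simpa using this
        have h2 : G * ‖φ q‖ ≤ ‖g q * φ q‖ := by
          rw [norm_mul]; exact mul_le_mul_of_nonneg_right (hg q hqmem) (norm_nonneg _)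
        have h3 := he q hqmem
        nlinarith
      by_contra hcon
      push Not at hcon
      have hup : ∀ z ∈ sphere q (ϱ / N), ‖φ z‖ ≤ Real.exp (j+1) * ‖φ p‖ := by
        intro z hz
        refine (hcon z ?_).le.trans (by push_cast; exact le_rfl)
        rw [mem_sphere] at hz
        push_cast
        linarith [dist_triangle z q p]
      have hc := Complex.norm_iteratedDeriv_le_of_forall_mem_sphere_norm_le k hη
        hφ.diffContOnCl hup
      have h0q : 0 < ‖φ q‖ := lt_of_lt_of_le hp0 hpq
      have he3 : Real.exp 1 < 3 := by linarith [Real.exp_one_lt_d9]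
      have h5 : G / 2 * ‖φ q‖ < k.factorial * (N/ϱ)^k * (3 * ‖φ q‖) := by
        refine lt_of_le_of_lt (hlow.trans hc) ?_
        have : (k.factorial:ℝ) * (Real.exp (j+1) * ‖φ p‖) / (ϱ/N)^k
            = k.factorial * (N/ϱ)^k * (Real.exp 1 * (Real.exp j * ‖φ p‖)) := by
          rw [Real.exp_add, div_pow, div_pow]; field_simp
        rw [this]
        have : Real.exp 1 * (Real.exp j * ‖φ p‖) < 3 * ‖φ q‖ := by
          calc _ ≤ Real.exp 1 * ‖φ q‖ := by gcongr
            _ < _ := by gcongr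
        have hpos : 0 < (k.factorial:ℝ) * (N/ϱ)^k := by positivity
        gcongr
      nlinarith
  obtain ⟨q, hq, hqe⟩ := key N le_rfl
  refine ⟨q, ?_, hqe⟩
  rw [mem_closedBall]
  have : (N:ℝ) * (ϱ / N) = ϱ := by field_simp
  linarith

theorem hasDerivAt_iteratedDeriv {φ : ℂ → ℂ} (hφ : Differentiable ℂ φ) (j : ℕ) (z : ℂ) :
    HasDerivAt (iteratedDeriv j φ) (iteratedDeriv (j + 1) φ z) z := by
  rw [iteratedDeriv_succ]
  have h : ContDiff ℂ (j + 1 : ℕ) φ := hφ.contDiff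
  exact ((h.differentiable_iteratedDeriv j (by exact_mod_cast Nat.lt_succ_self j)) z).hasDerivAt

/-- Growth of solutions of `φ⁽ᵏ⁾ = O(λᵏ) φ + O(1)` along a horizontal segment. -/
theorem norm_le_of_iteratedDeriv_le_on_segment {φ : ℂ → ℂ} (hφ : Differentiable ℂ φ) {k : ℕ}
    (hk : 1 ≤ k) {z : ℂ} {x l Y : ℝ} (hx : 0 ≤ x) (hl : 0 < l) (hY : 0 ≤ Y)
    (hode : ∀ t ∈ Icc 0 x, ‖iteratedDeriv k φ (z - (t : ℂ))‖ ≤ l ^ k * ‖φ (z - (t : ℂ))‖ + 1)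
    (h0 : ∀ j < k, ‖iteratedDeriv j φ z‖ ≤ l ^ j * Y) :
    ‖φ (z - (x : ℂ))‖ ≤ (Y + (l ^ k)⁻¹) * Real.exp (l * x) := by
  have : NeZero k := ⟨by omega⟩
  let u : ℝ → (Fin k → ℂ) := fun t j => ((l : ℂ) ^ (j : ℕ))⁻¹ * iteratedDeriv j φ (z - (t : ℂ))
  let u' : ℝ → (Fin k → ℂ) := fun t j =>
    ((l : ℂ) ^ (j : ℕ))⁻¹ * (iteratedDeriv (j + 1) φ (z - (t : ℂ)) * (-1))
  have hu : ∀ t, HasDerivAt u (u' t) t := by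
    intro t
    rw [hasDerivAt_pi]
    intro j
    have h1 : HasDerivAt (fun t : ℂ => z - t) (-1) (t : ℂ) := by
      simpa using (hasDerivAt_id (t : ℂ)).const_sub z
    have h2 := (hasDerivAt_iteratedDeriv hφ j (z - (t : ℂ))).comp (t : ℂ) h1
    exact (h2.comp_ofReal).const_mul _
  have hbound : ∀ t ∈ Ico 0 x, ‖u' t‖ ≤ l * ‖u t‖ + (l ^ (k - 1))⁻¹ := by
    intro t ht
    have hge : 0 ≤ l * ‖u t‖ + (l ^ (k - 1))⁻¹ := by positivity
    rw [pi_norm_le_iff_of_nonneg hge]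
    intro j
    have hnorm : ‖u' t j‖ = (l ^ (j:ℕ))⁻¹ * ‖iteratedDeriv (j + 1) φ (z - (t : ℂ))‖ := by
      simp [u', abs_of_pos hl]
    rw [hnorm]
    by_cases hj : (j : ℕ) + 1 < k
    · have h1 := norm_le_pi_norm (u t) ⟨(j : ℕ) + 1, hj⟩
      have h2 : ‖u t ⟨(j : ℕ) + 1, hj⟩‖
          = (l ^ ((j:ℕ) + 1))⁻¹ * ‖iteratedDeriv (j + 1) φ (z - (t : ℂ))‖ := by
        simp [u, abs_of_pos hl]
      rw [h2] at h1
      have h3 : (l ^ (j:ℕ))⁻¹ * ‖iteratedDeriv (j + 1) φ (z - (t : ℂ))‖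
          = l * ((l ^ ((j:ℕ) + 1))⁻¹ * ‖iteratedDeriv (j + 1) φ (z - (t : ℂ))‖) := by
        rw [pow_succ]; field_simp
      rw [h3]
      have : 0 ≤ (l ^ (k - 1))⁻¹ := by positivity
      nlinarith
    · have hjk : (j : ℕ) + 1 = k := by omega
      have hjk' : (j : ℕ) = k - 1 := by omega
      have h1 := norm_le_pi_norm (u t) 0
      have h2 : ‖u t 0‖ = ‖φ (z - (t : ℂ))‖ := by simp [u]
      rw [h2] at h1
      rw [hjk, hjk']
      have h3 := hode t ⟨ht.1, ht.2.le⟩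
      have h4 : l ^ k = l ^ (k - 1) * l := by
        conv_lhs => rw [← Nat.sub_add_cancel hk, pow_succ]
      calc (l ^ (k - 1))⁻¹ * ‖iteratedDeriv k φ (z - (t : ℂ))‖
          ≤ (l ^ (k - 1))⁻¹ * (l ^ k * ‖φ (z - (t : ℂ))‖ + 1) := by gcongr
        _ = l * ‖φ (z - (t : ℂ))‖ + (l ^ (k - 1))⁻¹ := by rw [h4]; field_simp
        _ ≤ _ := by gcongr
  have hu0 : ‖u 0‖ ≤ Y := by
    rw [pi_norm_le_iff_of_nonneg hY]
    intro j
    have : ‖u 0 j‖ = (l ^ (j:ℕ))⁻¹ * ‖iteratedDeriv j φ z‖ := by simp [u, abs_of_pos hl]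
    rw [this, inv_mul_le_iff₀ (by positivity)]
    exact h0 j j.2
  have hmain := norm_le_gronwallBound_of_norm_deriv_right_le (f := u) (f' := u') (a := 0) (b := x)
    (fun t _ => (hu t).continuousAt.continuousWithinAt)
    (fun t _ => (hu t).hasDerivWithinAt) hu0 hbound x ⟨hx, le_rfl⟩
  rw [gronwallBound_of_K_ne_0 hl.ne', sub_zero] at hmain
  have h1 := norm_le_pi_norm (u x) 0
  have h2 : ‖u x 0‖ = ‖φ (z - (x : ℂ))‖ := by simp [u]
  rw [h2] at h1
  have h4 : l ^ k = l ^ (k - 1) * l := by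
    conv_lhs => rw [← Nat.sub_add_cancel hk, pow_succ]
  have h5 : (l ^ (k - 1))⁻¹ / l = (l ^ k)⁻¹ := by rw [h4]; field_simp
  rw [h5] at hmain
  have h6 : 0 < (l ^ k)⁻¹ := by positivity
  nlinarith

/-- A version of Hadamard's three circles theorem with an integer exponent. -/
theorem norm_le_max_of_three_circles {f : ℂ → ℂ} (hf : Differentiable ℂ f) {c : ℂ}
    {r₁ r₂ r₃ ε M : ℝ} (h₁ : 0 < r₁) (h₁₂ : r₁ ≤ r₂) (h₂₃ : Real.exp 1 * r₂ ≤ r₃)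
    (hε : ∀ z ∈ closedBall c r₁, ‖f z‖ ≤ ε) (hM : ∀ z ∈ closedBall c r₃, ‖f z‖ ≤ M) (m : ℕ)
    {z : ℂ} (hz : z ∈ closedBall c r₂) :
    ‖f z‖ ≤ max (ε * (r₂ / r₁) ^ m) (M * Real.exp (-m)) := by
  have he : 1 < Real.exp 1 := by simp
  have h2 : 0 < r₂ := by linarith
  have h23 : r₂ < r₃ := by nlinarith
  have hε0 : 0 ≤ ε := (norm_nonneg _).trans (hε c (mem_closedBall_self h₁.le))
  have hM0 : 0 ≤ M := (norm_nonneg _).trans (hM c (mem_closedBall_self (by linarith)))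
  rw [mem_closedBall] at hz
  by_cases hz1 : dist z c ≤ r₁
  · refine le_max_of_le_left ((hε z hz1).trans ?_)
    exact le_mul_of_one_le_right hε0 (one_le_pow₀ ((one_le_div h₁).2 h₁₂))
  push Not at hz1
  let U : Set ℂ := ball c r₃ \ closedBall c r₁
  have hUo : IsOpen U := isOpen_ball.sdiff isClosed_closedBall
  have hcl : closure U ⊆ {w | r₁ ≤ dist w c ∧ dist w c ≤ r₃} := by
    apply closure_minimal
    · rintro w ⟨hw, hw'⟩
      simp only [mem_ball, mem_closedBall, not_le] at hw hw'
      exact ⟨hw'.le, hw.le⟩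
    · have hcd : Continuous fun w : ℂ => dist w c := by fun_prop
      exact (isClosed_le continuous_const hcd).inter (isClosed_le hcd continuous_const)
  have hne : ∀ w ∈ closure U, (w - c) ^ m ≠ 0 := by
    intro w hw
    have := (hcl hw).1
    apply pow_ne_zero
    intro h
    rw [dist_eq_norm, h, norm_zero] at this
    linarith
  have hd : DiffContOnCl ℂ (fun w => f w / (w - c) ^ m) U := by
    apply DifferentiableOn.diffContOnCl
    intro w hw
    exact ((hf w).div (by fun_prop) (hne w hw)).differentiableWithinAt
  have hfr : ∀ w ∈ frontier U, ‖f w / (w - c) ^ m‖ ≤ max (ε / r₁ ^ m) (M / r₃ ^ m) := by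
    intro w hw
    rw [hUo.frontier_eq] at hw
    have h3 := hcl hw.1
    have h4 : dist w c = r₁ ∨ dist w c = r₃ := by
      by_contra hcon
      push Not at hcon
      apply hw.2
      refine ⟨mem_ball.2 (lt_of_le_of_ne h3.2 hcon.2), ?_⟩
      rw [mem_closedBall, not_le]
      exact lt_of_le_of_ne h3.1 (Ne.symm hcon.1)
    rw [norm_div, norm_pow, ← dist_eq_norm]
    rcases h4 with h4 | h4
    · rw [h4]
      apply le_max_of_le_left
      gcongr
      exact hε w (by rw [mem_closedBall, h4])
    · rw [h4]
      apply le_max_of_le_right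
      have : 0 < r₃ := by linarith
      gcongr
      exact hM w (by rw [mem_closedBall, h4])
  have hzU : z ∈ closure U := subset_closure
    ⟨mem_ball.2 (by linarith), by rw [mem_closedBall, not_le]; exact hz1⟩
  have hres := Complex.norm_le_of_forall_mem_frontier_norm_le
    (isBounded_ball.subset sdiff_subset) hd hfr hzU
  rw [norm_div, norm_pow, ← dist_eq_norm, div_le_iff₀ (pow_pos (h₁.trans hz1) m)] at hres
  refine hres.trans ?_
  have hpow : dist z c ^ m ≤ r₂ ^ m := by gcongr
  have h6 : max (ε / r₁ ^ m) (M / r₃ ^ m) * dist z c ^ m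
      ≤ max (ε / r₁ ^ m) (M / r₃ ^ m) * r₂ ^ m := by
    refine mul_le_mul_of_nonneg_left hpow (le_max_of_le_left (by positivity))
  refine h6.trans ?_
  rw [max_mul_of_nonneg _ _ (by positivity)]
  apply max_le_max
  · rw [div_pow]; apply le_of_eq; field_simp
  · rw [div_mul_eq_mul_div, mul_div_assoc]
    gcongr
    have h3 : 0 < r₃ := by linarith
    rw [← div_pow]
    have : Real.exp (-(m:ℝ)) = (Real.exp (-1)) ^ m := by rw [← Real.exp_nat_mul]; ring_nf
    rw [this]
    gcongr
    rw [div_le_iff₀ h3, Real.exp_neg, inv_mul_eq_div, le_div_iff₀ (by positivity)]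
    linarith

/-- A Hopf type boundary lemma for the real part of a holomorphic function. -/
theorem re_le_two_mul_norm_deriv_of_pos {h : ℂ → ℂ} (hh : Differentiable ℂ h) {w z₀ : ℂ}
    (hpos : ∀ z ∈ ball w (dist z₀ w), 0 < (h z).re) (hz₀ : (h z₀).re = 0) (hne : z₀ ≠ w) :
    (h w).re ≤ 2 * (‖deriv h z₀‖ * dist z₀ w) := by
  set t := dist z₀ w with ht
  have ht0 : 0 < t := dist_pos.2 hne
  have hc : 0 < (h w).re := hpos w (mem_ball_self ht0)
  let ψ : ℂ → ℂ := fun z => (h z - h w) / (h z + (starRingEnd ℂ) (h w))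
  have hden : ∀ z ∈ ball w t, h z + (starRingEnd ℂ) (h w) ≠ 0 := by
    intro z hz h0
    have := congrArg Complex.re h0
    simp at this
    linarith [hpos z hz]
  have hψd : DifferentiableOn ℂ ψ (ball w t) := fun z hz =>
    (((hh z).sub_const _).div ((hh z).add_const _) (hden z hz)).differentiableWithinAt
  have hψw : ψ w = 0 := by simp [ψ]
  have hψm : MapsTo ψ (ball w t) (closedBall (ψ w) 1) := by
    intro z hz
    rw [hψw, mem_closedBall, dist_zero_right, norm_div,
      div_le_one (norm_pos_iff.2 (hden z hz))]
    rw [← sq_le_sq₀ (norm_nonneg _) (norm_nonneg _), Complex.sq_norm, Complex.sq_norm]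
    simp only [Complex.normSq_apply, Complex.sub_re, Complex.sub_im, Complex.add_re,
      Complex.add_im, Complex.conj_re, Complex.conj_im]
    nlinarith [hpos z hz]
  have hharn : ∀ s ∈ Ico (0:ℝ) 1, (h w).re * (1 - s) / 2 ≤ (h (w + s * (z₀ - w))).re := by
    intro s hs
    set z := w + s * (z₀ - w) with hz
    have hdz : dist z w = s * t := by
      rw [hz, dist_eq_norm, ht, dist_eq_norm]
      simp [abs_of_nonneg hs.1]
    have hzb : z ∈ ball w t := by
      rw [mem_ball, hdz]; nlinarith [hs.2]
    have h1 := Complex.dist_le_div_mul_dist_of_mapsTo_ball hψd hψm hzb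
    rw [hψw, dist_zero_right, hdz, norm_div, div_le_iff₀ (norm_pos_iff.2 (hden z hzb))] at h1
    have h2 : 1 / t * (s * t) = s := by field_simp
    rw [h2] at h1
    have h3 : ‖h z - h w‖ ^ 2 ≤ (s * ‖h z + (starRingEnd ℂ) (h w)‖) ^ 2 := by gcongr
    rw [mul_pow, Complex.sq_norm, Complex.sq_norm] at h3
    simp only [Complex.normSq_apply, Complex.sub_re, Complex.sub_im, Complex.add_re,
      Complex.add_im, Complex.conj_re, Complex.conj_im] at h3
    have hp := hpos z hzb
    have h4 : ((h z).re - (h w).re) ^ 2 ≤ (s * ((h z).re + (h w).re)) ^ 2 := by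
      have : s ^ 2 ≤ 1 := by nlinarith [hs.1, hs.2]
      nlinarith [mul_nonneg (sub_nonneg.2 this) (sq_nonneg ((h z).im - (h w).im))]
    have h5 := abs_le_of_sq_le_sq' h4 (mul_nonneg hs.1 (by linarith))
    have h6 := h5.1
    have h7 : (h w).re * (1 - s) ≤ (h z).re * (1 + s) := by linarith
    nlinarith [hs.1, hs.2]
  let g : ℝ → ℝ := fun s => (h (w + s * (z₀ - w))).re
  have hgd : HasDerivAt g ((deriv h z₀ * (z₀ - w)).re) 1 := by
    have h1 : HasDerivAt (fun s : ℂ => w + s * (z₀ - w)) (z₀ - w) ((1:ℝ) : ℂ) := by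
      simpa using ((hasDerivAt_id ((1:ℝ):ℂ)).mul_const (z₀ - w)).const_add w
    have h2 : HasDerivAt h (deriv h z₀) (w + ((1:ℝ):ℂ) * (z₀ - w)) := by
      simpa using (hh z₀).hasDerivAt
    exact (h2.comp ((1:ℝ):ℂ) h1).real_of_complex
  have hslope := (hasDerivAt_iff_tendsto_slope_left_right.1 hgd).1
  have hg1 : g 1 = 0 := by simp [g, hz₀]
  have hle : (deriv h z₀ * (z₀ - w)).re ≤ -((h w).re / 2) := by
    refine le_of_tendsto hslope ?_
    filter_upwards [Ioo_mem_nhdsLT (zero_lt_one' ℝ)] with s hs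
    have h1 := hharn s ⟨hs.1.le, hs.2⟩
    rw [slope_def_field, hg1, div_le_iff_of_neg (by linarith [hs.2])]
    change _ ≤ g s - 0
    change _ ≤ g s at h1
    linarith
  have h8 : |(deriv h z₀ * (z₀ - w)).re| ≤ ‖deriv h z₀‖ * t := by
    rw [ht, dist_eq_norm, ← norm_mul]
    exact Complex.abs_re_le_norm _
  linarith [neg_abs_le (deriv h z₀ * (z₀ - w)).re]

/-- A one-sided bound for the real part of a holomorphic function controls its derivative. -/
theorem norm_deriv_le_of_re_le {h : ℂ → ℂ} (hh : Differentiable ℂ h) {z₀ : ℂ} {A ρ : ℝ}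
    (hA : 0 < A) (hρ : 0 < ρ) (hre : ∀ z ∈ ball z₀ ρ, (h z).re ≤ (h z₀).re + A) {w : ℂ}
    (hw : dist w z₀ ≤ ρ / 2) : ‖deriv h w‖ ≤ 24 * A / ρ := by
  have hdc : DiffContOnCl ℂ (fun z => h z - h z₀) (ball w (ρ / 4)) :=
    (hh.sub_const _).diffContOnCl
  have hb : ∀ z ∈ sphere w (ρ / 4), ‖h z - h z₀‖ ≤ 6 * A := by
    intro z hz
    rw [mem_sphere] at hz
    have hd : dist z z₀ ≤ 3 / 4 * ρ := by linarith [dist_triangle z w z₀]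
    have hbc := Complex.borelCaratheodory_zero (f := fun u => h (u + z₀) - h z₀) (z := z - z₀)
      (R := ρ) hA (((hh.comp (differentiable_id.add_const z₀)).sub_const _).differentiableOn)
      (by
        intro u hu
        have := hre (u + z₀) (by simpa [dist_eq_norm] using hu)
        simp only [mem_ofPred_eq, Complex.sub_re]
        linarith) hρ (by rw [mem_ball, dist_zero_right, ← dist_eq_norm]; linarith) (by simp)
    simp only [sub_add_cancel] at hbc
    rw [← dist_eq_norm z] at hbc
    refine hbc.trans ?_
    rw [div_le_iff₀ (by linarith)]
    nlinarith
  have := Complex.norm_deriv_le_of_forall_mem_sphere_norm_le (by positivity) hdc hb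
  rw [deriv_sub_const] at this
  refine this.trans (le_of_eq ?_)
  field_simp; norm_num

theorem norm_deriv_sub_le_of_re_le {h : ℂ → ℂ} (hh : Differentiable ℂ h) {z₀ : ℂ} {A ρ : ℝ}
    (hA : 0 < A) (hρ : 0 < ρ) (hre : ∀ z ∈ ball z₀ ρ, (h z).re ≤ (h z₀).re + A) {w : ℂ}
    (hw : dist w z₀ < ρ / 2) :
    ‖deriv h w - deriv h z₀‖ ≤ 96 * A / ρ ^ 2 * dist w z₀ := by
  have hd : Differentiable ℂ (deriv h) := by
    have : ContDiff ℂ 2 h := hh.contDiff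
    exact (this.iterate_deriv' 1 1).differentiable (by norm_num)
  have := Complex.dist_le_div_mul_dist_of_mapsTo_ball (f := deriv h) (c := z₀) (R₁ := ρ / 2)
    (R₂ := 48 * A / ρ) hd.differentiableOn (by
      intro z hz
      rw [mem_closedBall, dist_eq_norm]
      have h1 := norm_deriv_le_of_re_le hh hA hρ hre (le_of_lt (mem_ball.1 hz))
      have h2 := norm_deriv_le_of_re_le hh hA hρ hre (w := z₀) (by simp; positivity)
      calc _ ≤ ‖deriv h z‖ + ‖deriv h z₀‖ := norm_sub_le _ _
        _ ≤ 24 * A / ρ + 24 * A / ρ := add_le_add h1 h2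
        _ = _ := by ring) (mem_ball.2 hw)
  rw [dist_eq_norm] at this
  refine this.trans (le_of_eq ?_)
  field_simp; ring

/-- A point where `Re h` is positive lies near a zero of `Re h` at which `h'` is not small. -/
theorem exists_re_eq_zero_and_le_norm_deriv {h : ℂ → ℂ} (hh : Differentiable ℂ h) {w b : ℂ}
    (hw : 0 < (h w).re) (hb : (h b).re = 0) :
    ∃ z, (h z).re = 0 ∧ dist z w ≤ dist b w ∧ (h w).re ≤ 2 * (‖deriv h z‖ * dist z w) := by
  have hcl : IsClosed {z | (h z).re = 0} :=
    isClosed_eq (Complex.continuous_re.comp hh.continuous) continuous_const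
  obtain ⟨z, hz, hmin⟩ := hcl.exists_infDist_eq_dist ⟨b, hb⟩ w
  have hz' : (h z).re = 0 := hz
  have hlow : ∀ y, (h y).re = 0 → dist z w ≤ dist y w := by
    intro y hy
    rw [dist_comm z, ← hmin, dist_comm y]
    exact infDist_le_dist_of_mem hy
  refine ⟨z, hz, hlow b hb, re_le_two_mul_norm_deriv_of_pos hh ?_ hz ?_⟩
  · intro y hy
    by_contra hneg
    push Not at hneg
    have hpre : IsPreconnected (ball w (dist z w)) := (convex_ball _ _).isPreconnected
    have hyb : w ∈ ball w (dist z w) := mem_ball_self (dist_nonneg.trans_lt hy)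
    obtain ⟨x, hx, hx0⟩ := hpre.intermediate_value hy hyb
      (Complex.continuous_re.comp hh.continuous).continuousOn ⟨hneg, hw.le⟩
    exact absurd (hlow x hx0) (not_le.2 hx)
  · rintro rfl
    linarith

/-- Rescaling: near some zero of `Re h` the entire function `h` is almost affine on a disc whose
image has radius comparable to a given value of `Re h`. -/
theorem exists_almost_affine_disc {h : ℂ → ℂ} (hh : Differentiable ℂ h) {r : ℝ} (hr : 0 < r)
    {w b : ℂ} (hwr : ‖w‖ ≤ r) (hbr : ‖b‖ ≤ r) (hw : 0 < (h w).re) (hb : (h b).re = 0) :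
    ∃ z₀ δ, 0 < δ ∧ (h z₀).re = 0 ∧ ‖z₀‖ + δ ≤ 4 * r ∧
      (h w).re ≤ 64 * r * ‖deriv h z₀‖ ∧ (h w).re ≤ 640000 * (‖deriv h z₀‖ * δ) ∧
      r * (h w).re * ‖deriv h z₀‖ ≤ 6400000000 * (‖deriv h z₀‖ * δ) ^ 2 ∧
      ∀ z ∈ ball z₀ δ, ‖deriv h z - deriv h z₀‖ ≤ ‖deriv h z₀‖ * (dist z z₀ / (10 * δ)) := by
  have hd : Differentiable ℂ (deriv h) := by
    have : ContDiff ℂ 2 h := hh.contDiff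
    exact (this.iterate_deriv' 1 1).differentiable (by norm_num)
  let Z : Set ℂ := {z | (h z).re = 0} ∩ closedBall 0 (4 * r)
  have hZ : IsCompact Z := (isCompact_closedBall 0 (4 * r)).inter_left
    (isClosed_eq (Complex.continuous_re.comp hh.continuous) continuous_const)
  let W : ℂ → ℝ := fun z => ‖deriv h z‖ * (4 * r - ‖z‖) ^ 2
  have hWc : Continuous W := by
    have := hd.continuous
    fun_prop
  obtain ⟨z₁, hz₁, hz₁w, hz₁d⟩ := exists_re_eq_zero_and_le_norm_deriv hh hw hb
  have hbw : dist b w ≤ 2 * r := by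
    rw [dist_eq_norm]; linarith [norm_sub_le b w]
  have hz₁n : ‖z₁‖ ≤ 3 * r := by
    have h1 : ‖z₁‖ ≤ dist z₁ w + ‖w‖ := by
      rw [dist_eq_norm]; simpa using norm_add_le (z₁ - w) w
    linarith
  have hz₁Z : z₁ ∈ Z := ⟨hz₁, by rw [mem_closedBall, dist_zero_right]; linarith⟩
  obtain ⟨z₀, hz₀Z, hmax⟩ := hZ.exists_isMaxOn ⟨z₁, hz₁Z⟩ hWc.continuousOn
  have hz₀ : (h z₀).re = 0 := hz₀Z.1
  have hz₀n : ‖z₀‖ ≤ 4 * r := by simpa using hz₀Z.2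
  set A := (h w).re with hA
  set L := ‖deriv h z₀‖ with hL
  have hW1 : A * r / 4 ≤ W z₁ := by
    have h1 : A ≤ 4 * r * ‖deriv h z₁‖ := by nlinarith [norm_nonneg (deriv h z₁)]
    have h2 : r ^ 2 ≤ (4 * r - ‖z₁‖) ^ 2 := by gcongr; linarith
    have h3 : ‖deriv h z₁‖ * r ^ 2 ≤ W z₁ := by
      change _ ≤ ‖deriv h z₁‖ * _
      gcongr
    nlinarith
  have hW0 : A * r / 4 ≤ W z₀ := hW1.trans (hmax hz₁Z)
  set η := (4 * r - ‖z₀‖) / 2 with hη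
  have hWη : W z₀ = 4 * (L * η ^ 2) := by
    change L * (4 * r - ‖z₀‖) ^ 2 = _
    rw [hη]; ring
  have hAr : 0 < A * r := by positivity
  have hLη : A * r / 16 ≤ L * η ^ 2 := by linarith
  have hη0 : 0 < η := by
    have h1 : 0 ≤ η := by rw [hη]; linarith
    rcases h1.eq_or_lt with h2 | h2
    · rw [← h2] at hLη; simp at hLη; linarith
    · exact h2
  have hη2 : η ≤ 2 * r := by rw [hη]; linarith [norm_nonneg z₀]
  have hL0 : 0 < L := by
    rcases (norm_nonneg (deriv h z₀)).eq_or_lt with h2 | h2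
    · rw [← hL] at h2; rw [← h2] at hLη; simp at hLη; linarith
    · exact h2
  have hnear : ∀ z, (h z).re = 0 → dist z z₀ ≤ η → ‖deriv h z‖ ≤ 4 * L := by
    intro z hz hzd
    have h1 : ‖z‖ ≤ ‖z₀‖ + η := by
      have : ‖z‖ ≤ dist z z₀ + ‖z₀‖ := by
        rw [dist_eq_norm]; simpa using norm_add_le (z - z₀) z₀
      linarith
    have h2 : η ≤ 4 * r - ‖z‖ := by linarith
    have h3 : z ∈ Z := ⟨hz, by rw [mem_closedBall, dist_zero_right]; linarith⟩
    have h4 : W z ≤ W z₀ := hmax h3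
    rw [hWη] at h4
    have h5 : ‖deriv h z‖ * η ^ 2 ≤ W z := by
      change _ ≤ ‖deriv h z‖ * _
      gcongr
    have h6 : ‖deriv h z‖ * η ^ 2 ≤ (4 * L) * η ^ 2 := by linarith
    exact le_of_mul_le_mul_right h6 (by positivity)
  have hup : ∀ z ∈ ball z₀ (η / 2), (h z).re ≤ (h z₀).re + 4 * L * η := by
    intro z hz
    rw [mem_ball] at hz
    rw [hz₀, zero_add]
    by_cases hpos : 0 < (h z).re
    · obtain ⟨y, hy0, hyd, hyh⟩ := exists_re_eq_zero_and_le_norm_deriv hh hpos hz₀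
      rw [dist_comm z₀] at hyd
      have h1 := hnear y hy0 (by linarith [dist_triangle y z z₀])
      have h2 : ‖deriv h y‖ * dist y z ≤ 4 * L * (η / 2) := by
        gcongr; linarith
      linarith
    · push Not at hpos
      exact hpos.trans (by positivity)
  refine ⟨z₀, η / 20000, by positivity, hz₀, by linarith, ?_, ?_, ?_, ?_⟩
  · have h1 : L * η ^ 2 ≤ L * (2 * r) ^ 2 := by gcongr
    have h2 : A * r ≤ (64 * r * L) * r := by nlinarith
    exact le_of_mul_le_mul_right h2 hr
  · have h1 : L * η ^ 2 ≤ (L * η) * (2 * r) := by nlinarith [mul_pos hL0 hη0]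
    have h2 : A * r ≤ (32 * (L * η)) * r := by nlinarith
    have h3 := le_of_mul_le_mul_right h2 hr
    linarith
  · have h1 : A * r / 16 * L ≤ (L * η ^ 2) * L := by gcongr
    nlinarith
  · intro z hz
    rw [mem_ball] at hz
    have h1 := norm_deriv_sub_le_of_re_le hh (A := 4 * L * η) (ρ := η / 2) (by positivity)
      (by positivity) hup (w := z) (by linarith)
    refine h1.trans ?_
    have h2 : 96 * (4 * L * η) / (η / 2) ^ 2 * dist z z₀ = L * (1536 * (dist z z₀ / η)) := by
      field_simp; ring
    have h3 : L * (dist z z₀ / (10 * (η / 20000))) = L * (2000 * (dist z z₀ / η)) := by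
      field_simp; ring
    rw [h2, h3]
    have : 0 ≤ dist z z₀ / η := by positivity
    gcongr
    norm_num

/-- The real part of a small Lipschitz perturbation of the identity. -/
theorem abs_re_sub_sub_le {η : ℂ → ℂ} {R : ℝ}
    (hη : ∀ x ∈ closedBall (0 : ℂ) R, ∀ y ∈ closedBall (0 : ℂ) R,
      ‖(η x - x) - (η y - y)‖ ≤ 1 / 10 * ‖x - y‖) {x y : ℂ}
    (hx : ‖x‖ ≤ R) (hy : ‖y‖ ≤ R) :
    |(η x).re - (η y).re - (x - y).re| ≤ 1 / 10 * ‖x - y‖ := by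
  refine le_trans ?_ (hη x (by simpa using hx) y (by simpa using hy))
  refine le_trans (le_of_eq ?_) (Complex.abs_re_le_norm _)
  congr 1
  simp only [Complex.sub_re]
  ring

/-- Solutions are bounded by one where the coefficient is large. -/
theorem norm_le_one_of_re_ge {φ η : ℂ → ℂ} (hφ : Differentiable ℂ φ) {k : ℕ} {R : ℝ}
    (hη : ∀ x ∈ closedBall (0 : ℂ) R, ∀ y ∈ closedBall (0 : ℂ) R,
      ‖(η x - x) - (η y - y)‖ ≤ 1 / 10 * ‖x - y‖)
    (hode : ∀ s ∈ closedBall (0 : ℂ) R, iteratedDeriv k φ s = Complex.exp (η s) * φ s + 1)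
    {b T t : ℝ} {N : ℕ} (hN : 0 < N) (hbN : b ≤ N) (ht : t ≤ R) (hT : 2 ≤ T)
    (hNT : 6 * k.factorial * (N : ℝ) ^ k ≤ Real.exp (T - 2))
    (hb : ∀ s ∈ closedBall (0 : ℂ) t, 0 ≤ (η s).re → ‖φ s‖ ≤ Real.exp b) {p : ℂ}
    (hp : ‖p‖ + 1 ≤ t) (hpT : T ≤ (η p).re) : ‖φ p‖ ≤ 1 := by
  by_contra! hcon
  have hball : ∀ z ∈ closedBall p 1, ‖z‖ ≤ t := by
    intro z hz
    rw [mem_closedBall, dist_eq_norm] at hz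
    have : ‖z‖ ≤ ‖p‖ + ‖z - p‖ := by simpa using norm_add_le p (z - p)
    linarith
  have hre : ∀ z ∈ closedBall p 1, T - 2 ≤ (η z).re := by
    intro z hz
    have h1 := abs_re_sub_sub_le hη ((hball z hz).trans ht) (y := p) (by linarith)
    rw [mem_closedBall, dist_eq_norm] at hz
    have h2 := (Complex.abs_re_le_norm (z - p)).trans hz
    rw [abs_le] at h1 h2
    linarith [h1.1, h2.1]
  have hG : (2:ℝ) ≤ Real.exp (T - 2) := by
    refine le_trans ?_ hNT
    have h1 : (1:ℝ) ≤ k.factorial := by exact_mod_cast Nat.one_le_iff_ne_zero.2 (Nat.factorial_ne_zero k)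
    have h2 : (1:ℝ) ≤ (N:ℝ) ^ k := one_le_pow₀ (by exact_mod_cast hN)
    nlinarith
  obtain ⟨q, hq, hqp⟩ := exists_exp_mul_norm_le_of_iteratedDeriv_eq hφ (k := k) (N := N) (p := p)
    (ϱ := 1) (G := Real.exp (T - 2)) (E := 1) (g := fun z => Complex.exp (η z)) (e := fun _ => 1)
    one_pos hN
    (fun z hz => hode z (by simpa using (hball z hz).trans ht))
    (fun z hz => by
      rw [Complex.norm_exp]
      exact Real.exp_le_exp.2 (hre z hz))
    (fun z _ => by simp) (by simpa using hNT) (by nlinarith)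
  have h3 := hb q (by simpa using hball q hq) (by linarith [hre q hq])
  have h4 : Real.exp b ≤ Real.exp N := Real.exp_le_exp.2 hbN
  have h5 : Real.exp (N:ℝ) * 1 < Real.exp N * ‖φ p‖ :=
    mul_lt_mul_of_pos_left hcon (Real.exp_pos _)
  linarith

/-- Bounds on the right half propagate to the left with exponential loss. -/
theorem norm_le_exp_of_re_le {φ η : ℂ → ℂ} (hφ : Differentiable ℂ φ) (hηd : Differentiable ℂ η)
    {k : ℕ} (hk : 1 ≤ k) {R : ℝ}
    (hη : ∀ x ∈ closedBall (0 : ℂ) R, ∀ y ∈ closedBall (0 : ℂ) R,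
      ‖(η x - x) - (η y - y)‖ ≤ 1 / 10 * ‖x - y‖)
    (hode : ∀ s ∈ closedBall (0 : ℂ) R, iteratedDeriv k φ s = Complex.exp (η s) * φ s + 1)
    {b t D : ℝ} (ht : t ≤ R) (hb0 : 0 ≤ b) (hD0 : 0 ≤ D)
    (hb : ∀ s ∈ closedBall (0 : ℂ) t, 0 ≤ (η s).re → ‖φ s‖ ≤ Real.exp b) {q : ℂ}
    (hq : ‖q‖ + D + 1 ≤ t) (hq2 : (η q).re ≤ 2) (hqD : 2 - (η q).re ≤ 9 / 10 * D) :
    ‖φ q‖ ≤ (k.factorial + 1) * Real.exp (b + 8 * D) := by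
  have hxn : ∀ x ∈ Icc 0 D, ‖q + (x : ℂ)‖ ≤ ‖q‖ + D := by
    intro x hx
    refine (norm_add_le _ _).trans ?_
    rw [Complex.norm_real, Real.norm_of_nonneg hx.1]
    linarith [hx.2]
  have hmono : ∀ x ∈ Icc 0 D, ∀ y ∈ Icc 0 D, x ≤ y →
      (η (q + (x : ℂ))).re + 9 / 10 * (y - x) ≤ (η (q + (y : ℂ))).re := by
    intro x hx y hy hxy
    have h1 := abs_re_sub_sub_le hη (x := q + (y : ℂ)) (y := q + (x : ℂ))
      (by linarith [hxn y hy]) (by linarith [hxn x hx])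
    have h2 : q + (y : ℂ) - (q + (x : ℂ)) = ((y - x : ℝ) : ℂ) := by push_cast; ring
    rw [h2, Complex.norm_real, Real.norm_of_nonneg (by linarith), Complex.ofReal_re, abs_le] at h1
    linarith [h1.1]
  have hcont : Continuous fun x : ℝ => (η (q + (x : ℂ))).re :=
    Complex.continuous_re.comp (hηd.continuous.comp (by fun_prop))
  obtain ⟨x, hx, hx2⟩ : ∃ x ∈ Icc 0 D, (η (q + (x : ℂ))).re = 2 := by
    have := intermediate_value_Icc hD0 hcont.continuousOn
    refine this ⟨by simpa using hq2, ?_⟩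
    have := hmono 0 ⟨le_rfl, hD0⟩ D ⟨hD0, le_rfl⟩ hD0
    simp only [Complex.ofReal_zero, add_zero] at this
    linarith
  set q₁ := q + (x : ℂ) with hq₁
  have hball : ∀ z ∈ closedBall q₁ 1, ‖φ z‖ ≤ Real.exp b := by
    intro z hz
    rw [mem_closedBall, dist_eq_norm] at hz
    have h3 : ‖z‖ ≤ ‖q₁‖ + ‖z - q₁‖ := by simpa using norm_add_le q₁ (z - q₁)
    have hzt : ‖z‖ ≤ t := by linarith [hxn x hx]
    refine hb z (by simpa using hzt) ?_
    have h1 := abs_re_sub_sub_le hη (hzt.trans ht) (y := q₁) (by linarith [hxn x hx])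
    have h2 := (Complex.abs_re_le_norm (z - q₁)).trans hz
    rw [abs_le] at h1 h2
    linarith [h1.1, h2.1]
  have hexp2 : Real.exp 2 ≤ 8 := by
    have := Real.exp_one_lt_d9
    have h2 : Real.exp 2 = Real.exp 1 * Real.exp 1 := by rw [← Real.exp_add]; norm_num
    rw [h2]; nlinarith [Real.exp_pos 1]
  have h8 : (8:ℝ) ≤ 8 ^ k := le_self_pow₀ (by norm_num) (by omega)
  have hseg := norm_le_of_iteratedDeriv_le_on_segment hφ hk (z := q₁) (x := x) (l := 8)
    (Y := k.factorial * Real.exp b) hx.1 (by norm_num) (by positivity) (by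
      intro s hs
      have hs' : x - s ∈ Icc 0 D := ⟨by linarith [hs.2], by linarith [hs.1, hx.2]⟩
      have he : q₁ - (s : ℂ) = q + ((x - s : ℝ) : ℂ) := by rw [hq₁]; push_cast; ring
      rw [he, hode _ (by simpa using (by linarith [hxn _ hs'] : ‖q + ((x - s : ℝ) : ℂ)‖ ≤ R))]
      refine (norm_add_le _ _).trans ?_
      rw [norm_mul, Complex.norm_exp, norm_one]
      gcongr
      have h3 := hmono _ hs' x hx (by linarith [hs.1])
      have : Real.exp (η (q + ((x - s : ℝ) : ℂ))).re ≤ Real.exp 2 :=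
        Real.exp_le_exp.2 (by linarith [hs.1])
      linarith) (by
      intro j hj
      have h1 := Complex.norm_iteratedDeriv_le_of_forall_mem_sphere_norm_le j one_pos
        hφ.diffContOnCl (fun z hz => hball z (sphere_subset_closedBall hz))
      rw [one_pow, div_one] at h1
      refine h1.trans ?_
      have h2 : (j.factorial : ℝ) ≤ k.factorial := by exact_mod_cast Nat.factorial_le hj.le
      have h3 : (1:ℝ) ≤ 8 ^ j := one_le_pow₀ (by norm_num)
      have h4 : (0:ℝ) ≤ k.factorial * Real.exp b := by positivity
      calc (j.factorial : ℝ) * Real.exp b ≤ k.factorial * Real.exp b := by gcongr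
        _ ≤ _ := by nlinarith)
  have hq' : q₁ - (x : ℂ) = q := by rw [hq₁]; ring
  rw [hq'] at hseg
  refine hseg.trans ?_
  have h5 : (((8:ℝ) ^ k)⁻¹) ≤ Real.exp b :=
    (inv_le_one_of_one_le₀ (by linarith)).trans (Real.one_le_exp hb0)
  rw [Real.exp_add, ← mul_assoc]
  have h6 : Real.exp (8 * x) ≤ Real.exp (8 * D) := Real.exp_le_exp.2 (by linarith [hx.2])
  have h7 : (k.factorial : ℝ) * Real.exp b + ((8:ℝ) ^ k)⁻¹ ≤ (k.factorial + 1) * Real.exp b := by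
    linarith
  gcongr

/-- One bootstrap step. -/
theorem norm_le_exp_four_fifths {φ η : ℂ → ℂ} (hφ : Differentiable ℂ φ)
    (hηd : Differentiable ℂ η) {k : ℕ} (hk : 1 ≤ k) {R : ℝ}
    (hη : ∀ x ∈ closedBall (0 : ℂ) R, ∀ y ∈ closedBall (0 : ℂ) R,
      ‖(η x - x) - (η y - y)‖ ≤ 1 / 10 * ‖x - y‖)
    (hode : ∀ s ∈ closedBall (0 : ℂ) R, iteratedDeriv k φ s = Complex.exp (η s) * φ s + 1)
    {b T t : ℝ} (ht : t ≤ R) (hT : 24 ≤ T) (hTk : (k.factorial : ℝ) + 1 ≤ Real.exp (T - 24))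
    (hbT : 700 * T ≤ b) (hNT : 6 * k.factorial * (b + 1) ^ k ≤ Real.exp (T - 2))
    (hb : ∀ s ∈ closedBall (0 : ℂ) t, 0 ≤ (η s).re → ‖φ s‖ ≤ Real.exp b) :
    ∀ s ∈ closedBall (0 : ℂ) (t - 10 * T), 0 ≤ (η s).re → ‖φ s‖ ≤ Real.exp (4 / 5 * b) := by
  intro p hp hp0
  rw [mem_closedBall_zero_iff] at hp
  have hb0 : 0 < b := by linarith
  have hN : 0 < ⌈b⌉₊ := Nat.ceil_pos.2 hb0
  have hNT' : 6 * k.factorial * ((⌈b⌉₊ : ℕ) : ℝ) ^ k ≤ Real.exp (T - 2) := by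
    refine le_trans ?_ hNT
    have := (Nat.ceil_lt_add_one hb0.le).le
    gcongr
  have hone : ∀ z : ℂ, ‖z‖ + 1 ≤ t → T ≤ (η z).re → ‖φ z‖ ≤ 1 := fun z hz hzT =>
    norm_le_one_of_re_ge hφ hη hode hN (Nat.le_ceil b) ht (by linarith) hNT' hb hz hzT
  have hall : ∀ z : ℂ, ‖z - p‖ = 4 * T → ‖φ z‖ ≤ Real.exp (b + 41 * T) := by
    intro z hz
    have hzn : ‖z‖ ≤ ‖p‖ + ‖z - p‖ := by simpa using norm_add_le p (z - p)
    by_cases hz0 : 0 ≤ (η z).re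
    · refine (hb z (by rw [mem_closedBall_zero_iff]; linarith) hz0).trans
        (Real.exp_le_exp.2 (by linarith))
    · push Not at hz0
      have h1 := abs_re_sub_sub_le hη (x := z) (y := p) (by linarith) (by linarith)
      have h2 := Complex.abs_re_le_norm (z - p)
      rw [abs_le] at h1 h2
      have h3 := norm_le_exp_of_re_le hφ hηd hk hη hode ht hb0.le (D := 5 * T + 3) (by linarith) hb
        (q := z) (by linarith) (by linarith) (by linarith [h1.1, h2.1])
      refine h3.trans ?_
      have h4 : Real.exp (b + 41 * T) = Real.exp (T - 24) * Real.exp (b + 8 * (5 * T + 3)) := by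
        rw [← Real.exp_add]; ring_nf
      rw [h4]
      gcongr
  have hright : ∀ z : ℂ, ‖z - p‖ = 4 * T → 28 / 10 * T ≤ (z - p).re → ‖φ z‖ ≤ 1 := by
    intro z hz hzr
    have hzn : ‖z‖ ≤ ‖p‖ + ‖z - p‖ := by simpa using norm_add_le p (z - p)
    have h1 := abs_re_sub_sub_le hη (x := z) (y := p) (by linarith) (by linarith)
    rw [abs_le] at h1
    exact hone z (by linarith) (by linarith [h1.1])
  let P : ℂ → ℂ := fun s =>
    (φ (p + s) * φ (p - s)) * (φ (p + Complex.I * s) * φ (p - Complex.I * s))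
  have hP : Differentiable ℂ P := by
    refine Differentiable.mul (Differentiable.mul ?_ ?_) (Differentiable.mul ?_ ?_) <;>
    exact hφ.comp (by fun_prop)
  have hsph : ∀ s ∈ frontier (ball (0:ℂ) (4 * T)), ‖P s‖ ≤ Real.exp (3 * (b + 41 * T)) := by
    intro s hs
    rw [frontier_ball _ (by linarith), mem_sphere_zero_iff_norm] at hs
    have e1 : ‖p + s - p‖ = 4 * T := by simpa using hs
    have e2 : ‖p - s - p‖ = 4 * T := by simpa using hs
    have e3 : ‖p + Complex.I * s - p‖ = 4 * T := by simpa using hs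
    have e4 : ‖p - Complex.I * s - p‖ = 4 * T := by simpa using hs
    have a1 := hall _ e1
    have a2 := hall _ e2
    have a3 := hall _ e3
    have a4 := hall _ e4
    have hE : Real.exp (3 * (b + 41 * T)) =
        (Real.exp (b + 41 * T) * Real.exp (b + 41 * T)) * Real.exp (b + 41 * T) := by
      rw [← Real.exp_add, ← Real.exp_add]; ring_nf
    have hsq : s.re ^ 2 + s.im ^ 2 = (4 * T) ^ 2 := by
      rw [← hs, Complex.sq_norm, Complex.normSq_apply]; ring
    rw [hE]
    simp only [P, norm_mul]
    set B := Real.exp (b + 41 * T)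
    have hB : 0 ≤ B := (Real.exp_pos _).le
    rcases le_or_gt (28 / 10 * T) |s.re| with h | h
    · rcases le_abs.1 h with h | h
      · have := hright _ e1 (by simpa using h)
        calc _ ≤ (1 * B) * (B * B) := by gcongr
          _ = _ := by ring
      · have := hright _ e2 (by simpa using h)
        calc _ ≤ (B * 1) * (B * B) := by gcongr
          _ = _ := by ring
    · have h' : 28 / 10 * T ≤ |s.im| := by
        rw [abs_lt] at h
        refine le_of_sq_le_sq ?_ (abs_nonneg _) 
        rw [sq_abs]
        nlinarith
      rcases le_abs.1 h' with h | h
      · have := hright _ e4 (by simpa using h)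
        calc _ ≤ (B * B) * (B * 1) := by gcongr
          _ = _ := by ring
      · have := hright _ e3 (by simpa using h)
        calc _ ≤ (B * B) * (1 * B) := by gcongr
          _ = _ := by ring
  have h0 := Complex.norm_le_of_forall_mem_frontier_norm_le isBounded_ball hP.diffContOnCl hsph
    (subset_closure (mem_ball_self (by linarith : 0 < 4 * T)))
  have hP0 : ‖P 0‖ = ‖φ p‖ ^ 4 := by
    simp only [P, mul_zero, add_zero, sub_zero, norm_mul]; ring
  rw [hP0] at h0
  have h5 : Real.exp (3 * (b + 41 * T)) ≤ Real.exp (4 / 5 * b) ^ 4 := by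
    rw [← Real.exp_nat_mul]
    refine Real.exp_le_exp.2 ?_
    push_cast
    linarith
  exact le_of_pow_le_pow_left₀ (by norm_num) (Real.exp_pos _).le (h0.trans h5)

/-- Iterating the bootstrap step. -/
theorem norm_le_exp_of_iterate {φ η : ℂ → ℂ} (hφ : Differentiable ℂ φ)
    (hηd : Differentiable ℂ η) {k : ℕ} (hk : 1 ≤ k) {R : ℝ}
    (hη : ∀ x ∈ closedBall (0 : ℂ) R, ∀ y ∈ closedBall (0 : ℂ) R,
      ‖(η x - x) - (η y - y)‖ ≤ 1 / 10 * ‖x - y‖)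
    (hode : ∀ s ∈ closedBall (0 : ℂ) R, iteratedDeriv k φ s = Complex.exp (η s) * φ s + 1)
    {A : ℝ} (hA : 24 ≤ A) (hAk : (k : ℝ) ≤ A) (hAf : (k.factorial : ℝ) + 1 ≤ Real.exp (A - 24))
    (hA2 : 6 * k.factorial * (2801 * A) ^ k ≤ Real.exp (A - 2)) (m : ℕ) :
    ∀ t ≤ R, (∀ s ∈ closedBall (0 : ℂ) t, 0 ≤ (η s).re →
      ‖φ s‖ ≤ Real.exp (2800 * A * (5 / 4) ^ m)) →
    ∀ s ∈ closedBall (0 : ℂ) (t - 10 * A * (m + 1) ^ 2), 0 ≤ (η s).re →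
      ‖φ s‖ ≤ Real.exp (2800 * A) := by
  induction m with
  | zero =>
    intro t _ h s hs hs0
    refine (h s (closedBall_subset_closedBall ?_ hs) hs0).trans_eq (by simp)
    norm_num
    linarith
  | succ m ih =>
    intro t ht h s hs hs0
    have hbern : 1 + (m + 1 : ℕ) * (1 / 4 : ℝ) ≤ (1 + 1 / 4) ^ (m + 1) :=
      one_add_mul_le_pow (by norm_num) (m + 1)
    norm_num at hbern
    set u : ℝ := (5 / 4) ^ (m + 1) with hu
    have hm0 : (0:ℝ) ≤ m := Nat.cast_nonneg m
    have hu1 : 1 ≤ u := one_le_pow₀ (by norm_num)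
    have huexp : u ≤ Real.exp (m + 1) := by
      have h1 : (5 / 4 : ℝ) ≤ Real.exp 1 := by linarith [Real.exp_one_gt_d9]
      calc u ≤ Real.exp 1 ^ (m + 1) := by rw [hu]; gcongr
        _ = Real.exp (m + 1) := by rw [← Real.exp_nat_mul]; push_cast; ring_nf
    have hAm : A ≤ A * (m + 2) := by nlinarith
    have hstep := norm_le_exp_four_fifths hφ hηd hk hη hode (b := 2800 * A * u)
      (T := A * (m + 2)) ht (by linarith)
      (hAf.trans (Real.exp_le_exp.2 (by linarith))) (by nlinarith) (by
        have h1 : 2800 * A * u + 1 ≤ 2801 * A * u := by nlinarith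
        calc 6 * (k.factorial : ℝ) * (2800 * A * u + 1) ^ k
            ≤ 6 * k.factorial * (2801 * A * u) ^ k := by gcongr
          _ = 6 * k.factorial * (2801 * A) ^ k * u ^ k := by rw [mul_pow _ u]; ring
          _ ≤ Real.exp (A - 2) * Real.exp (m + 1) ^ k := by gcongr
          _ = Real.exp (A - 2 + k * (m + 1)) := by rw [← Real.exp_nat_mul, ← Real.exp_add]
          _ ≤ _ := Real.exp_le_exp.2 (by nlinarith)) h
    refine ih (t - 10 * (A * (m + 2))) (by nlinarith) ?_ s
      (closedBall_subset_closedBall ?_ hs) hs0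
    · intro z hz hz0
      refine (hstep z hz hz0).trans_eq ?_
      rw [hu, pow_succ]
      ring_nf
    · push_cast
      nlinarith

/-- Solutions of `φ⁽ᵏ⁾ = e^η φ + 1` with `η` close to the identity on a large disc grow at most
exponentially near the centre, once they satisfy a crude bound on the disc. -/
theorem exists_norm_le_exp_add_mul_norm {k : ℕ} (hk : 1 ≤ k) :
    ∃ κ > 0, ∃ C > 0, ∃ R₀ > 0, ∀ φ η : ℂ → ℂ, Differentiable ℂ φ → Differentiable ℂ η →
      ∀ R ≥ R₀, (∀ x ∈ closedBall (0 : ℂ) R, ∀ y ∈ closedBall (0 : ℂ) R,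
        ‖(η x - x) - (η y - y)‖ ≤ 1 / 10 * ‖x - y‖) →
      (∀ s ∈ closedBall (0 : ℂ) R, iteratedDeriv k φ s = Complex.exp (η s) * φ s + 1) →
      (η 0).re = 0 →
      (∀ s ∈ closedBall (0 : ℂ) R, ‖φ s‖ ≤ Real.exp (Real.exp (κ * √R))) →
      ∀ s ∈ closedBall (0 : ℂ) (R / 8), ‖φ s‖ ≤ Real.exp (C + 11 * ‖s‖) := by
  obtain ⟨A, hA, hAk, hAf, hA2⟩ : ∃ A : ℝ, 24 ≤ A ∧ (k : ℝ) ≤ A ∧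
      (k.factorial : ℝ) + 1 ≤ Real.exp (A - 24) ∧
      6 * k.factorial * (2801 * A) ^ k ≤ Real.exp (A - 2) := by
    have h1 : Tendsto (fun A : ℝ => Real.exp (A - 24)) atTop atTop :=
      Real.tendsto_exp_atTop.comp (tendsto_atTop_add_const_right _ _ tendsto_id)
    have h2 := Real.tendsto_exp_div_pow_atTop k
    obtain ⟨A, a1, a2, a3, a4⟩ := ((eventually_ge_atTop (24:ℝ)).and ((eventually_ge_atTop (k:ℝ)).and
      ((h1.eventually_ge_atTop ((k.factorial : ℝ) + 1)).and
      (h2.eventually_ge_atTop (6 * k.factorial * 2801 ^ k * Real.exp 2))))).exists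
    refine ⟨A, a1, a2, a3, ?_⟩
    rw [le_div_iff₀ (by positivity)] at a4
    rw [Real.exp_sub, le_div_iff₀ (Real.exp_pos _), mul_pow]
    linarith
  refine ⟨1 / (80 * A), by positivity, 2801 * A, by positivity, 320 * A, by positivity, ?_⟩
  intro φ η hφ hηd R hR hη hode hη0 hgr s hs
  rw [mem_closedBall_zero_iff] at hs
  set κ := 1 / (80 * A) with hκ
  have hκ0 : 0 < κ := by positivity
  set m := ⌈8 * (κ * √R)⌉₊ with hm
  have hR0 : 0 < R := by linarith
  have hm1 : 8 * (κ * √R) ≤ m := Nat.le_ceil _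
  have hm2 : (m : ℝ) < 8 * (κ * √R) + 1 := Nat.ceil_lt_add_one (by positivity)
  have hbase : ∀ s ∈ closedBall (0 : ℂ) R, 0 ≤ (η s).re →
      ‖φ s‖ ≤ Real.exp (2800 * A * (5 / 4) ^ m) := by
    intro s hs _
    refine (hgr s hs).trans (Real.exp_le_exp.2 ?_)
    have h1 : Real.exp (1 / 8) ≤ 5 / 4 := by
      have h2 := Real.add_one_le_exp (-(1 / 8) : ℝ)
      have h3 : Real.exp (1 / 8) * Real.exp (-(1 / 8)) = 1 := by
        rw [← Real.exp_add]; norm_num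
      nlinarith [Real.exp_pos (1 / 8)]
    calc Real.exp (κ * √R) ≤ Real.exp (m * (1 / 8)) := Real.exp_le_exp.2 (by linarith)
      _ = Real.exp (1 / 8) ^ m := Real.exp_nat_mul _ _
      _ ≤ (5 / 4) ^ m := by gcongr
      _ ≤ _ := le_mul_of_one_le_left (by positivity) (by linarith)
  have hiter := norm_le_exp_of_iterate hφ hηd hk hη hode hA hAk hAf hA2 m R le_rfl hbase
  have hrad : R / 2 ≤ R - 10 * A * (m + 1) ^ 2 := by
    have h1 : ((m : ℝ) + 1) ^ 2 ≤ 128 * (κ ^ 2 * R) + 8 := by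
      have h2 : (κ * √R) ^ 2 = κ ^ 2 * R := by rw [mul_pow, Real.sq_sqrt hR0.le]
      have h3 : 0 ≤ κ * √R := by positivity
      rw [← h2]
      have : ((m : ℝ) + 1) ^ 2 ≤ (8 * (κ * √R) + 2) ^ 2 :=
        pow_le_pow_left₀ (by positivity) (by linarith) 2
      nlinarith [sq_nonneg (8 * (κ * √R) - 2)]
    have h4 : A * (κ ^ 2 * R) * (6400 * A) = R := by
      rw [hκ]; field_simp; norm_num
    have h5 : A * (κ ^ 2 * R) * (6400 * 24) ≤ R := by
      have : 0 ≤ A * (κ ^ 2 * R) := by positivity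
      have h6 := mul_le_mul_of_nonneg_left (show (6400 * 24 : ℝ) ≤ 6400 * A by linarith) this
      exact h6.trans_eq h4
    have h7 : 10 * A * ((m : ℝ) + 1) ^ 2 ≤ 10 * A * (128 * (κ ^ 2 * R) + 8) := by gcongr
    nlinarith
  have hhalf : ∀ s ∈ closedBall (0 : ℂ) (R / 2), 0 ≤ (η s).re → ‖φ s‖ ≤ Real.exp (2800 * A) :=
    fun s hs => hiter s (closedBall_subset_closedBall hrad hs)
  rcases le_or_gt 0 (η s).re with h | h
  · refine (hhalf s (by rw [mem_closedBall_zero_iff]; linarith) h).trans (Real.exp_le_exp.2 ?_)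
    linarith [norm_nonneg s]
  · have h1 := abs_re_sub_sub_le hη (x := s) (y := 0) (by linarith) (by simpa using hR0.le)
    have h2 := Complex.abs_re_le_norm s
    rw [sub_zero, hη0, abs_le] at h1
    rw [abs_le] at h2
    have h3 := norm_le_exp_of_re_le hφ hηd hk hη hode (b := 2800 * A) (t := R / 2)
      (D := 13 / 10 * ‖s‖ + 3) (by linarith) (by positivity) (by positivity) hhalf (q := s)
      (by linarith) (by linarith) (by linarith [h1.1, h2.1])
    refine h3.trans ?_
    calc ((k.factorial : ℝ) + 1) * Real.exp (2800 * A + 8 * (13 / 10 * ‖s‖ + 3))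
        ≤ Real.exp (A - 24) * Real.exp (2800 * A + 8 * (13 / 10 * ‖s‖ + 3)) := by gcongr
      _ = Real.exp (A - 24 + (2800 * A + 8 * (13 / 10 * ‖s‖ + 3))) :=
        (Real.exp_add _ _).symm
      _ ≤ _ := Real.exp_le_exp.2 (by linarith [norm_nonneg s])

/-- Solutions of `φ⁽ᵏ⁾ = e^η φ + 1` with `η` nearly a translation are nearly `2πi`-periodic. -/
theorem norm_add_two_pi_sub_le {φ η : ℂ → ℂ} (hφ : Differentiable ℂ φ) {k N m : ℕ} (hN : 0 < N)
    {M Λ X θ ε : ℝ} (hM : 10 ≤ M) (hX : 0 ≤ X) (hXM : X + 1 ≤ M)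
    (hε : 4 * ε ≤ Real.exp (-(20 * M + 1 + N)))
    (hη : ∀ s ∈ closedBall (0 : ℂ) (20 * M), ‖η s - s - θ * Complex.I‖ ≤ ε)
    (hode : ∀ s ∈ closedBall (0 : ℂ) (20 * M), iteratedDeriv k φ s = Complex.exp (η s) * φ s + 1)
    (hb : ∀ s ∈ closedBall (0 : ℂ) (20 * M), ‖φ s‖ ≤ Real.exp Λ)
    (hG : 6 * k.factorial * (N : ℝ) ^ k ≤ Real.exp (M - 3)) {z : ℂ}
    (hz : z ∈ closedBall (-(X : ℂ)) 1) :
    ‖φ (z + 2 * Real.pi * Complex.I) - φ z‖ ≤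
      max (2 * Real.exp (Λ - N) * (2 * M) ^ m) (2 * Real.exp Λ * Real.exp (-m)) := by
  set c : ℂ := 2 * Real.pi * Complex.I with hc
  have hcn : ‖c‖ ≤ 7 := by
    rw [hc, norm_mul, norm_mul, Complex.norm_I, Complex.norm_real,
      Real.norm_of_nonneg Real.pi_pos.le, Complex.norm_ofNat]
    linarith [Real.pi_lt_d2]
  have hNR : (1:ℝ) ≤ N := by exact_mod_cast hN
  have hε1 : 4 * ε ≤ 1 := hε.trans (Real.exp_le_one_iff.2 (by linarith))
  have hsc : ∀ s : ℂ, ‖s‖ ≤ 19 * M → ‖s + c‖ ≤ 20 * M := fun s hs =>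
    (norm_add_le _ _).trans (by linarith)
  have hmem : ∀ {s : ℂ}, ‖s‖ ≤ 20 * M → s ∈ closedBall (0 : ℂ) (20 * M) := fun h => by simpa using h
  have hre : ∀ s : ℂ, ‖s‖ ≤ 20 * M → |(η s).re - s.re| ≤ ε := by
    intro s hs
    refine le_trans ?_ (hη s (hmem hs))
    refine le_trans (le_of_eq ?_) (Complex.abs_re_le_norm _)
    simp
  set D : ℂ → ℂ := fun s => φ (s + c) - φ s with hD
  have hDd : Differentiable ℂ D := (hφ.comp (by fun_prop)).sub hφ
  have hDb : ∀ s : ℂ, ‖s‖ ≤ 19 * M → ‖D s‖ ≤ 2 * Real.exp Λ := by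
    intro s hs
    refine (norm_sub_le _ _).trans ?_
    linarith [hb _ (hmem (hsc s hs)), hb s (hmem (by linarith))]
  set e : ℂ → ℂ := fun s => (Complex.exp (η (s + c)) - Complex.exp (η s)) * φ (s + c) with he
  have hDode : ∀ s : ℂ, ‖s‖ ≤ 19 * M → iteratedDeriv k D s = Complex.exp (η s) * D s + e s := by
    intro s hs
    have h1 : ContDiff ℂ k φ := hφ.contDiff
    have h2 : ContDiff ℂ k fun s => φ (s + c) := h1.comp (by fun_prop)
    rw [hD, iteratedDeriv_fun_sub h2.contDiffAt h1.contDiffAt,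
      iteratedDeriv_comp_add_const]
    beta_reduce
    rw [hode _ (hmem (hsc s hs)), hode s (hmem (by linarith)), he]
    ring
  have heb : ∀ s : ℂ, ‖s‖ ≤ 19 * M → ‖e s‖ ≤ Real.exp (Λ - N) := by
    intro s hs
    have hd : ‖η (s + c) - η s - c‖ ≤ 2 * ε := by
      have h1 := norm_sub_le (η (s + c) - (s + c) - θ * Complex.I) (η s - s - θ * Complex.I)
      have h2 : η (s + c) - (s + c) - θ * Complex.I - (η s - s - θ * Complex.I) =
        η (s + c) - η s - c := by ring
      rw [h2] at h1
      linarith [hη _ (hmem (hsc s hs)), hη s (hmem (by linarith))]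
    have h3 : Complex.exp (η (s + c)) - Complex.exp (η s) =
        Complex.exp (η s) * (Complex.exp (η (s + c) - η s - c) - 1) := by
      have h4 : Complex.exp (η (s + c) - c) = Complex.exp (η (s + c)) := by
        rw [hc]; exact Complex.exp_periodic.sub_eq _
      have h5 : η (s + c) - c = η s + (η (s + c) - η s - c) := by ring
      rw [mul_sub, mul_one, ← Complex.exp_add, ← h5, h4]
    have h6 : ‖Complex.exp (η s)‖ ≤ Real.exp (20 * M + 1) := by
      rw [Complex.norm_exp]
      refine Real.exp_le_exp.2 ?_
      have h7 := hre s (by linarith)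
      have h8 := Complex.re_le_norm s
      rw [abs_le] at h7
      linarith [h7.2]
    have h9 := Complex.norm_exp_sub_one_le (hd.trans (by linarith))
    simp only [he, norm_mul, h3]
    calc ‖Complex.exp (η s)‖ * ‖Complex.exp (η (s + c) - η s - c) - 1‖ * ‖φ (s + c)‖
        ≤ Real.exp (20 * M + 1) * Real.exp (-(20 * M + 1 + N)) * Real.exp Λ := by
          gcongr
          · linarith
          · exact hb _ (hmem (hsc s hs))
      _ = Real.exp (Λ - N) := by rw [← Real.exp_add, ← Real.exp_add]; ring_nf
  have hMn : ‖(M : ℂ)‖ = M := by rw [Complex.norm_real, Real.norm_of_nonneg (by linarith)]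
  have hnear : ∀ p ∈ closedBall (M : ℂ) 1, ‖D p‖ ≤ 2 * Real.exp (Λ - N) := by
    intro p hp
    rw [mem_closedBall, dist_eq_norm] at hp
    by_contra! hcon
    have hbl : ∀ z ∈ closedBall p 1, ‖z‖ ≤ 19 * M ∧ M - 3 ≤ (η z).re := by
      intro z hz
      rw [mem_closedBall, dist_eq_norm] at hz
      have h0 : ‖z - M‖ ≤ 2 := by
        have := norm_add_le (z - p) (p - M)
        rw [sub_add_sub_cancel] at this
        linarith
      have h1 : ‖z‖ ≤ 19 * M := by
        have := norm_add_le (z - M) (M : ℂ)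
        rw [sub_add_cancel] at this
        linarith
      refine ⟨h1, ?_⟩
      have h2 := hre z (by linarith)
      have h3 := (Complex.abs_re_le_norm (z - M)).trans h0
      rw [Complex.sub_re, Complex.ofReal_re, abs_le] at h3
      rw [abs_le] at h2
      linarith [h2.1, h3.1]
    have hG2 : (2:ℝ) ≤ Real.exp (M - 3) := by
      refine le_trans ?_ hG
      have h1 : (1:ℝ) ≤ k.factorial := by
        exact_mod_cast Nat.one_le_iff_ne_zero.2 (Nat.factorial_ne_zero k)
      have h2 : (1:ℝ) ≤ (N:ℝ) ^ k := one_le_pow₀ hNR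
      nlinarith
    have hpos := Real.exp_pos (Λ - N)
    obtain ⟨q, hq, hqp⟩ := exists_exp_mul_norm_le_of_iteratedDeriv_eq hDd (k := k) (N := N) (p := p)
      (ϱ := 1) (G := Real.exp (M - 3)) (E := Real.exp (Λ - N))
      (g := fun z => Complex.exp (η z)) (e := e) one_pos hN
      (fun z hz => hDode z (hbl z hz).1)
      (fun z hz => by
        rw [Complex.norm_exp]
        exact Real.exp_le_exp.2 (hbl z hz).2)
      (fun z hz => heb z (hbl z hz).1) (by simpa using hG) (by nlinarith)
    have h1 := hDb q (hbl q hq).1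
    have h2 : Real.exp N * (2 * Real.exp (Λ - N)) < Real.exp N * ‖D p‖ :=
      mul_lt_mul_of_pos_left hcon (Real.exp_pos _)
    have h3 : Real.exp N * (2 * Real.exp (Λ - N)) = 2 * Real.exp Λ := by
      rw [mul_left_comm, ← Real.exp_add]; ring_nf
    linarith
  have h3c := norm_le_max_of_three_circles hDd (c := (M : ℂ)) (r₁ := 1) (r₂ := 2 * M)
    (r₃ := 6 * M) one_pos (by linarith) (by nlinarith [Real.exp_one_lt_d9]) hnear (by
      intro s hs
      rw [mem_closedBall, dist_eq_norm] at hs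
      have := norm_add_le (s - M) (M : ℂ)
      rw [sub_add_cancel] at this
      exact hDb s (by linarith)) m (z := z) (by
      rw [mem_closedBall, dist_eq_norm] at hz ⊢
      have h1 : z - M = (z - -(X:ℂ)) + ((-(X + M) : ℝ) : ℂ) := by push_cast; ring
      rw [h1]
      refine (norm_add_le _ _).trans ?_
      rw [Complex.norm_real, norm_neg, Real.norm_of_nonneg (by linarith)]
      linarith)
  rwa [div_one] at h3c

/-- On the far left the `(k-1)`-st derivative drifts by about `2πi` over a period. -/
theorem pi_le_norm_iteratedDeriv_sub {φ η : ℂ → ℂ} (hφ : Differentiable ℂ φ) {k : ℕ} (hk : 1 ≤ k)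
    {S B X θ ε : ℝ} (hB : 0 ≤ B) (hX : (k : ℝ) + 1 ≤ X) (hXS : X + 7 ≤ S) (hε : ε ≤ 1)
    (hη : ∀ s ∈ closedBall (0 : ℂ) S, ‖η s - s - θ * Complex.I‖ ≤ ε)
    (hode : ∀ s ∈ closedBall (0 : ℂ) S, iteratedDeriv k φ s = Complex.exp (η s) * φ s + 1)
    (hb : ∀ s ∈ closedBall (0 : ℂ) (k + 10), ‖φ s‖ ≤ B)
    (hXB : 2 ^ k * (k.factorial * B + 1) * Real.exp (1 - X / 2) ≤ 1 / 2) :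
    Real.pi ≤ ‖iteratedDeriv (k - 1) φ (-(X : ℂ) + 2 * Real.pi * Complex.I) -
      iteratedDeriv (k - 1) φ (-(X : ℂ))‖ := by
  have hpi := Real.pi_lt_d2
  have hpi0 := Real.pi_pos
  have hre : ∀ s : ℂ, ‖s‖ ≤ S → (η s).re ≤ s.re + 1 := by
    intro s hs
    have h1 : |(η s).re - s.re| ≤ ε := by
      refine le_trans ?_ (hη s (by simpa using hs))
      refine le_trans (le_of_eq ?_) (Complex.abs_re_le_norm _)
      simp
    rw [abs_le] at h1
    linarith [h1.2]
  have hnorm : ∀ x t : ℝ, 0 ≤ x → x ≤ X → 0 ≤ t → t ≤ 2 * Real.pi →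
      ‖-(x : ℂ) + t * Complex.I‖ ≤ x + 7 := by
    intro x t hx _ ht ht2
    refine (norm_add_le _ _).trans ?_
    rw [norm_neg, norm_mul, Complex.norm_I, Complex.norm_real, Complex.norm_real,
      Real.norm_of_nonneg hx, Real.norm_of_nonneg ht]
    linarith
  have hk0 : (0:ℝ) ≤ k := Nat.cast_nonneg k
  have hleft : ∀ t : ℝ, 0 ≤ t → t ≤ 2 * Real.pi →
      ‖Complex.exp (η (-(X : ℂ) + t * Complex.I)) * φ (-(X : ℂ) + t * Complex.I)‖ ≤ 1 / 2 := by
    intro t ht ht2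
    have hseg := norm_le_of_iteratedDeriv_le_on_segment hφ hk
      (z := -((k + 1 : ℝ) : ℂ) + t * Complex.I) (x := X - (k + 1)) (l := 1 / 2)
      (Y := 2 ^ k * (k.factorial * B)) (by linarith) (by norm_num) (by positivity) (by
        intro s hs
        have he : -((k + 1 : ℝ) : ℂ) + t * Complex.I - (s : ℂ) =
          -((k + 1 + s : ℝ) : ℂ) + t * Complex.I := by push_cast; ring
        rw [he]
        have hn := hnorm (k + 1 + s) t (by linarith [hs.1]) (by linarith [hs.2]) ht ht2
        have hn' : ‖-((k + 1 + s : ℝ) : ℂ) + t * Complex.I‖ ≤ S := by linarith [hs.2]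
        rw [hode _ (by simpa using hn')]
        refine (norm_add_le _ _).trans ?_
        rw [norm_mul, Complex.norm_exp, norm_one]
        gcongr
        have h1 := hre _ hn'
        simp only [Complex.add_re, Complex.neg_re, Complex.ofReal_re, Complex.mul_re,
          Complex.I_re, mul_zero, Complex.ofReal_im, Complex.I_im, zero_mul, sub_self,
          add_zero] at h1
        calc _ ≤ Real.exp (k * (-1)) := Real.exp_le_exp.2 (by linarith [hs.1])
          _ = Real.exp (-1) ^ k := Real.exp_nat_mul _ _
          _ ≤ _ := by
            gcongr
            have := Real.exp_one_gt_d9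
            rw [Real.exp_neg, one_div]
            exact inv_anti₀ (by norm_num) (by linarith)) (by
        intro j hj
        have hz : ‖-((k + 1 : ℝ) : ℂ) + t * Complex.I‖ ≤ k + 8 := by
          have := hnorm (k + 1) t (by linarith) hX ht ht2
          linarith
        have h1 := Complex.norm_iteratedDeriv_le_of_forall_mem_sphere_norm_le j one_pos
          hφ.diffContOnCl (c := -((k + 1 : ℝ) : ℂ) + t * Complex.I) (C := B) (fun z hz' => by
            refine hb z ?_
            rw [mem_closedBall_zero_iff]
            rw [mem_sphere, dist_eq_norm] at hz'
            have := norm_add_le (z - (-((k + 1 : ℝ) : ℂ) + t * Complex.I))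
              (-((k + 1 : ℝ) : ℂ) + t * Complex.I)
            rw [sub_add_cancel] at this
            linarith)
        rw [one_pow, div_one] at h1
        refine h1.trans ?_
        have h2 : (j.factorial : ℝ) ≤ k.factorial := by exact_mod_cast Nat.factorial_le hj.le
        have h3 : (1:ℝ) ≤ (1 / 2) ^ j * 2 ^ k := by
          rw [one_div, inv_pow, ← div_eq_inv_mul, one_le_div (by positivity)]
          exact pow_le_pow_right₀ (by norm_num) hj.le
        have h4 : (0:ℝ) ≤ k.factorial * B := by positivity
        calc (j.factorial : ℝ) * B ≤ k.factorial * B := by gcongr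
          _ ≤ _ := by rw [← mul_assoc]; exact le_mul_of_one_le_left h4 h3)
    have he : -((k + 1 : ℝ) : ℂ) + t * Complex.I - ((X - (k + 1) : ℝ) : ℂ) =
      -(X : ℂ) + t * Complex.I := by push_cast; ring
    rw [he] at hseg
    have hn := hnorm X t (by linarith) le_rfl ht ht2
    have h1 := hre _ (hn.trans hXS)
    simp only [Complex.add_re, Complex.neg_re, Complex.ofReal_re, Complex.mul_re,
      Complex.I_re, mul_zero, Complex.ofReal_im, Complex.I_im, zero_mul, sub_self,
      add_zero] at h1
    rw [norm_mul, Complex.norm_exp]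
    refine le_trans ?_ hXB
    calc _ ≤ Real.exp (-X + 1) * ((2 ^ k * (k.factorial * B) + ((1 / 2) ^ k)⁻¹) *
          Real.exp (1 / 2 * (X - (k + 1)))) := by gcongr
      _ ≤ Real.exp (-X + 1) * ((2 ^ k * (k.factorial * B) + ((1 / 2) ^ k)⁻¹) *
          Real.exp (X / 2)) := by gcongr; linarith
      _ = 2 ^ k * (k.factorial * B + 1) * (Real.exp (-X + 1) * Real.exp (X / 2)) := by
        rw [one_div, inv_pow, inv_inv]; ring
      _ = _ := by rw [← Real.exp_add]; ring_nf
  let g : ℝ → ℂ := fun t => iteratedDeriv (k - 1) φ (-(X : ℂ) + t * Complex.I) - t * Complex.I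
  have hg : ∀ t : ℝ, HasDerivAt g
      (iteratedDeriv k φ (-(X : ℂ) + t * Complex.I) * Complex.I - Complex.I) t := by
    intro t
    have h1 := hasDerivAt_iteratedDeriv hφ (k - 1) (-(X : ℂ) + t * Complex.I)
    rw [Nat.sub_add_cancel hk] at h1
    have h2 : HasDerivAt (fun t : ℂ => -(X : ℂ) + t * Complex.I) Complex.I (t : ℂ) := by
      simpa using ((hasDerivAt_id (t : ℂ)).mul_const Complex.I).const_add (-(X : ℂ))
    have h3 : HasDerivAt (fun t : ℂ => t * Complex.I) Complex.I (t : ℂ) := by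
      simpa using (hasDerivAt_id (t : ℂ)).mul_const Complex.I
    exact ((h1.comp (t : ℂ) h2).sub h3).comp_ofReal
  have hmv := norm_image_sub_le_of_norm_deriv_le_segment' (f := g) (a := 0) (b := 2 * Real.pi)
    (C := 1 / 2) (fun t _ => (hg t).hasDerivWithinAt) (by
      intro t ht
      rw [hode _ (by simpa using (hnorm X t (by linarith) le_rfl ht.1 ht.2.le).trans hXS)]
      have : ∀ u : ℂ, ‖(u + 1) * Complex.I - Complex.I‖ = ‖u‖ := by
        intro u
        rw [add_mul, one_mul, add_sub_cancel_right, norm_mul, Complex.norm_I, mul_one]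
      rw [this]
      exact hleft t ht.1 ht.2.le) (2 * Real.pi) ⟨by positivity, le_rfl⟩
  have he : g (2 * Real.pi) - g 0 = (iteratedDeriv (k - 1) φ (-(X : ℂ) + 2 * Real.pi * Complex.I) -
      iteratedDeriv (k - 1) φ (-(X : ℂ))) - 2 * Real.pi * Complex.I := by
    simp only [g]
    push_cast
    simp only [zero_mul, add_zero]
    ring
  rw [he] at hmv
  have h2pi : ‖(2 * Real.pi * Complex.I : ℂ)‖ = 2 * Real.pi := by
    rw [norm_mul, norm_mul, Complex.norm_I, Complex.norm_real, Real.norm_of_nonneg hpi0.le,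
      Complex.norm_ofNat]
    ring
  have := norm_sub_norm_le (2 * Real.pi * Complex.I : ℂ)
    (iteratedDeriv (k - 1) φ (-(X : ℂ) + 2 * Real.pi * Complex.I) -
      iteratedDeriv (k - 1) φ (-(X : ℂ)))
  rw [norm_sub_rev] at hmv
  rw [h2pi] at this
  linarith

/-- Rigidity: there is no bounded family of solutions of `φ⁽ᵏ⁾ = e^s φ + 1` on large discs. -/
theorem exists_forall_not_solution {k : ℕ} (hk : 1 ≤ k) {Λ : ℝ → ℝ} (hΛm : Monotone Λ)
    (hΛ : ∀ᶠ M : ℝ in atTop, Λ (20 * M) ≤ Real.exp (1 / (4 * k) * M)) :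
    ∃ M > 0, ∃ ε > 0, ∀ φ η : ℂ → ℂ, ∀ θ : ℝ, Differentiable ℂ φ →
      (∀ s ∈ closedBall (0 : ℂ) (20 * M), ‖η s - s - θ * Complex.I‖ ≤ ε) →
      (∀ s ∈ closedBall (0 : ℂ) (20 * M),
        iteratedDeriv k φ s = Complex.exp (η s) * φ s + 1) →
      ¬ ∀ s ∈ closedBall (0 : ℂ) (20 * M), ‖φ s‖ ≤ Real.exp (Λ ‖s‖) := by
  have hk0 : (0:ℝ) < k := by exact_mod_cast hk
  set B := Real.exp (Λ (k + 10)) with hB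
  have hB0 : 0 < B := Real.exp_pos _
  obtain ⟨X, hX, hXB⟩ : ∃ X : ℝ, (k : ℝ) + 1 ≤ X ∧
      2 ^ k * (k.factorial * B + 1) * Real.exp (1 - X / 2) ≤ 1 / 2 := by
    have h1 : Tendsto (fun X : ℝ => 1 - X / 2) atTop atBot :=
      tendsto_atBot_add_const_left _ 1
        (tendsto_neg_atTop_atBot.comp (tendsto_id.atTop_div_const (by norm_num : (0:ℝ) < 2)))
    have h2 := (Real.tendsto_exp_atBot.comp h1).const_mul (2 ^ k * (k.factorial * B + 1))
    rw [mul_zero] at h2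
    obtain ⟨X, a1, a2⟩ := ((eventually_ge_atTop ((k:ℝ) + 1)).and
      (h2.eventually (ge_mem_nhds (by norm_num : (0:ℝ) < 1 / 2)))).exists
    exact ⟨X, a1, a2⟩
  set K : ℝ := Real.log (2 * k.factorial) + 1 with hK
  have hf1 : (1:ℝ) ≤ k.factorial := by
    exact_mod_cast Nat.one_le_iff_ne_zero.2 (Nat.factorial_ne_zero k)
  have hK0 : 1 ≤ K := by
    have : 0 ≤ Real.log (2 * k.factorial) := Real.log_nonneg (by linarith)
    linarith
  obtain ⟨M, hM10, hMX, hMk, hΛM, hpoly, hexp⟩ : ∃ M : ℝ, 10 ≤ M ∧ X + 7 ≤ M ∧ (k:ℝ) + 10 ≤ M ∧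
      Λ (20 * M) ≤ Real.exp (1 / (4 * k) * M) ∧
      (1 + K) * (3 + 2 * M) ≤ Real.exp (1 / (4 * k) * M) ∧
      6 * k.factorial * Real.exp 3 ≤ Real.exp (1 / 2 * M) := by
    have h1 : Tendsto (fun M : ℝ => Real.exp (1 / 2 * M)) atTop atTop :=
      Real.tendsto_exp_atTop.comp (tendsto_id.const_mul_atTop (by norm_num))
    have h2 := (isLittleO_pow_exp_pos_mul_atTop 1 (b := 1 / (4 * (k:ℝ))) (by positivity)).def
      (c := 1 / ((1 + K) * 5)) (by positivity)
    obtain ⟨M, a1, a2, a3, a4, a5, a6⟩ := ((eventually_ge_atTop (10:ℝ)).and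
      ((eventually_ge_atTop (X + 7)).and ((eventually_ge_atTop ((k:ℝ) + 10)).and
      (hΛ.and (h2.and (h1.eventually_ge_atTop (6 * k.factorial * Real.exp 3))))))).exists
    refine ⟨M, a1, a2, a3, a4, ?_, a6⟩
    rw [pow_one, Real.norm_of_nonneg (by linarith), Real.norm_of_nonneg (Real.exp_pos _).le,
      one_div_mul_eq_div, le_div_iff₀ (by positivity)] at a5
    nlinarith
  set Λ₀ := max 0 (Λ (20 * M)) with hΛ₀
  set u := Real.exp (1 / (4 * k) * M) with hu
  have hΛ₀u : Λ₀ ≤ u := max_le (Real.exp_pos _).le hΛM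
  have hΛ₀0 : 0 ≤ Λ₀ := le_max_left _ _
  set m := ⌈Λ₀ + K - 1⌉₊ with hm
  have hm1 : Λ₀ + K - 1 ≤ m := Nat.le_ceil _
  have hm2 : (m : ℝ) < Λ₀ + K := by
    have := Nat.ceil_lt_add_one (show 0 ≤ Λ₀ + K - 1 by linarith)
    linarith
  set N := ⌈(Λ₀ + K) * (1 + 2 * M)⌉₊ with hN
  have hN1 : (Λ₀ + K) * (1 + 2 * M) ≤ N := Nat.le_ceil _
  have hNpos : 0 < N := Nat.ceil_pos.2 (by positivity)
  have hu1 : 1 ≤ u := Real.one_le_exp (by positivity)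
  have hN2 : (N : ℝ) ≤ u * u := by
    have h1 := (Nat.ceil_lt_add_one (show 0 ≤ (Λ₀ + K) * (1 + 2 * M) by positivity)).le
    have h2 : (Λ₀ + K) * (1 + 2 * M) ≤ u * (1 + K) * (1 + 2 * M) := by
      gcongr
      nlinarith
    have h3 : u * ((1 + K) * (3 + 2 * M)) ≤ u * u := by gcongr
    nlinarith
  have hG : 6 * k.factorial * (N : ℝ) ^ k ≤ Real.exp (M - 3) := by
    have h1 : (N : ℝ) ^ k ≤ Real.exp (1 / 2 * M) := by
      calc (N : ℝ) ^ k ≤ (u * u) ^ k := by gcongr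
        _ = Real.exp (1 / 2 * M) := by
          rw [hu, ← Real.exp_add, ← Real.exp_nat_mul]
          congr 1
          field_simp
          norm_num
    have h2 : Real.exp (M - 3) * Real.exp 3 = Real.exp (1 / 2 * M) * Real.exp (1 / 2 * M) := by
      rw [← Real.exp_add, ← Real.exp_add]; ring_nf
    refine le_of_mul_le_mul_right ?_ (Real.exp_pos 3)
    rw [h2]
    calc 6 * (k.factorial : ℝ) * (N : ℝ) ^ k * Real.exp 3
        = 6 * k.factorial * Real.exp 3 * (N : ℝ) ^ k := by ring
      _ ≤ _ := by gcongr
  refine ⟨M, by linarith, Real.exp (-(20 * M + 1 + N)) / 4, by positivity, ?_⟩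
  intro φ η θ hφ hη hode hb
  have hε1 : Real.exp (-(20 * M + 1 + N)) / 4 ≤ 1 := by
    have : Real.exp (-(20 * M + 1 + N)) ≤ 1 := Real.exp_le_one_iff.2 (by
      have : (0:ℝ) ≤ N := Nat.cast_nonneg N
      linarith)
    linarith
  have hlow := pi_le_norm_iteratedDeriv_sub hφ hk (S := 20 * M) (B := B) (X := X) hB0.le hX
    (by linarith) hε1 hη hode (fun s hs => by
      rw [mem_closedBall_zero_iff] at hs
      exact (hb s (by rw [mem_closedBall_zero_iff]; linarith)).trans
        (Real.exp_le_exp.2 (hΛm hs))) hXB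
  have hup : ∀ z ∈ closedBall (-(X : ℂ)) 1,
      ‖φ (z + 2 * Real.pi * Complex.I) - φ z‖ ≤ 1 / k.factorial := by
    intro z hz
    refine (norm_add_two_pi_sub_le hφ hNpos (m := m) hM10 (by linarith) (by linarith)
      (by linarith) hη hode (Λ := Λ₀) (fun s hs => (hb s hs).trans
        (Real.exp_le_exp.2 ((hΛm (by simpa using hs)).trans (le_max_right _ _)))) hG hz).trans ?_
    have hlogf : Real.exp (-(K - 1)) = 1 / (2 * k.factorial) := by
      rw [hK, add_sub_cancel_right, Real.exp_neg, Real.exp_log (by positivity), one_div]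
    have hfin : 2 * Real.exp (-(K - 1)) = 1 / k.factorial := by
      rw [hlogf]; field_simp
    refine max_le ?_ ?_
    · rw [← hfin]
      have h2M : 2 * M ≤ Real.exp (2 * M) := by linarith [Real.add_one_le_exp (2 * M)]
      calc 2 * Real.exp (Λ₀ - N) * (2 * M) ^ m
          ≤ 2 * Real.exp (Λ₀ - N) * Real.exp (2 * M) ^ m := by gcongr
        _ = 2 * Real.exp (Λ₀ - N + m * (2 * M)) := by
          rw [← Real.exp_nat_mul, mul_assoc, ← Real.exp_add]
        _ ≤ _ := by
          gcongr
          nlinarith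
    · rw [← hfin, mul_assoc, ← Real.exp_add]
      gcongr
      linarith
  have hD : Differentiable ℂ fun z => φ (z + 2 * Real.pi * Complex.I) - φ z :=
    (hφ.comp (by fun_prop)).sub hφ
  have hc := Complex.norm_iteratedDeriv_le_of_forall_mem_sphere_norm_le (k - 1) one_pos
    hD.diffContOnCl (fun z hz => hup z (sphere_subset_closedBall hz))
  have h1 : ContDiff ℂ (k - 1 : ℕ) φ := hφ.contDiff
  have h2 : ContDiff ℂ (k - 1 : ℕ) fun s => φ (s + 2 * Real.pi * Complex.I) :=
    h1.comp (by fun_prop)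
  rw [iteratedDeriv_fun_sub h2.contDiffAt h1.contDiffAt, iteratedDeriv_comp_add_const,
    one_pow, div_one, mul_one_div] at hc
  have h3 : ((k - 1).factorial : ℝ) / k.factorial ≤ 1 := by
    rw [div_le_one (by linarith)]
    exact_mod_cast Nat.factorial_le (Nat.sub_le k 1)
  linarith [Real.pi_gt_three]

/-- Two entire functions with the same zeros, counted with multiplicity, differ by a factor
`exp h` with `h` entire. -/
theorem exists_eq_exp_mul_of_vanishesToOrder_iff {F G : ℂ → ℂ} (hF : Differentiable ℂ F)
    (hG : Differentiable ℂ G) {z₀ : ℂ} (hz₀ : F z₀ ≠ 0)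
    (hFG : ∀ z n, VanishesToOrder F z n ↔ VanishesToOrder G z n) :
    ∃ h : ℂ → ℂ, Differentiable ℂ h ∧ ∀ z, G z = Complex.exp (h z) * F z := by
  have hFa : ∀ z, AnalyticAt ℂ F z := fun z => hF.analyticAt z
  have hGa : ∀ z, AnalyticAt ℂ G z := fun z => hG.analyticAt z
  have hord : ∀ z, ∃ n : ℕ, analyticOrderAt F z = n ∧ analyticOrderAt G z = n := by
    intro z
    have h1 : analyticOrderAt F z ≠ ⊤ :=
      AnalyticOnNhd.analyticOrderAt_ne_top_of_isPreconnected (U := univ) (fun z _ => hFa z)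
        isPreconnected_univ (mem_univ z₀) (mem_univ z)
        (by rw [(hFa z₀).analyticOrderAt_eq_zero.2 hz₀]; exact ENat.zero_ne_top)
    obtain ⟨n, hn⟩ := ENat.ne_top_iff_exists.1 h1
    refine ⟨n, hn.symm, ?_⟩
    rw [analyticOrderAt_eq_nat_iff_iteratedDeriv_eq_zero (hGa z)]
    exact (hFG z n).1 ((analyticOrderAt_eq_nat_iff_iteratedDeriv_eq_zero (hFa z)).1 hn.symm)
  have hm : MeromorphicOn (G / F) univ := fun z _ => (hGa z).meromorphicAt.div (hFa z).meromorphicAt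
  set q := toMeromorphicNFOn (G / F) univ with hq
  have hNF : ∀ z, MeromorphicNFAt q z := fun z => meromorphicNFOn_toMeromorphicNFOn _ _ (mem_univ z)
  have hq0 : ∀ z, meromorphicOrderAt q z = 0 := by
    intro z
    obtain ⟨n, h1, h2⟩ := hord z
    rw [hq, meromorphicOrderAt_toMeromorphicNFOn hm (mem_univ z),
      meromorphicOrderAt_div (hGa z).meromorphicAt (hFa z).meromorphicAt,
      (hGa z).meromorphicOrderAt_eq, (hFa z).meromorphicOrderAt_eq, h1, h2]
    simp only [ENat.map_natCast]
    norm_cast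
    simp
  have hqa : ∀ z, AnalyticAt ℂ q z := fun z =>
    (hNF z).meromorphicOrderAt_nonneg_iff_analyticAt.1 (hq0 z).ge
  have hqne : ∀ z, q z ≠ 0 := fun z => (hNF z).meromorphicOrderAt_eq_zero_iff.1 (hq0 z)
  have hqd : Differentiable ℂ q := fun z => (hqa z).differentiableAt
  have hGq : ∀ z, G z = q z * F z := by
    intro z
    have h1 : q =ᶠ[nhdsWithin z {z}ᶜ] G / F :=
      hm.toMeromorphicNFOn_eq_self_on_nhdsNE (mem_univ z)
    have h2 : ∀ᶠ w in nhdsWithin z {z}ᶜ, F w ≠ 0 := by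
      refine ((hFa z).eventually_eq_zero_or_eventually_ne_zero).resolve_left ?_
      rw [← analyticOrderAt_eq_top]
      obtain ⟨n, hn, _⟩ := hord z
      rw [hn]
      exact ENat.natCast_ne_top n
    have h3 : G =ᶠ[nhdsWithin z {z}ᶜ] fun w => q w * F w := by
      filter_upwards [h1, h2] with w hw hw0
      rw [hw, Pi.div_apply, div_mul_cancel₀ _ hw0]
    have h4 := tendsto_nhds_unique_of_eventuallyEq
      (hG.continuous.continuousAt.tendsto.mono_left nhdsWithin_le_nhds)
      ((hqd.mul hF).continuous.continuousAt.tendsto.mono_left nhdsWithin_le_nhds) h3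
    simpa using h4
  obtain ⟨p, hp⟩ := (((hqd.contDiff (n := 2)).differentiable_deriv_two).div hqd
    hqne).isExactOn_univ
  have hp' : ∀ z, HasDerivAt p (deriv q z / q z) z := fun z => hp z (mem_univ z)
  have hconst : ∀ z, q z * Complex.exp (-p z) = q 0 * Complex.exp (-p 0) := by
    intro z
    refine is_const_of_deriv_eq_zero (𝕜 := ℂ)
      (f := fun z => q z * Complex.exp (-p z)) ?_ ?_ z 0
    · exact hqd.mul ((fun z => (hp' z).differentiableAt.neg.cexp))
    · intro w
      have h1 : HasDerivAt (fun z => q z * Complex.exp (-p z)) (deriv q w * Complex.exp (-p w) +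
          q w * (Complex.exp (-p w) * -(deriv q w / q w))) w :=
        (hqd w).hasDerivAt.mul (hp' w).neg.cexp
      rw [h1.deriv]
      field_simp [hqne w]
      ring
  have hc : q 0 * Complex.exp (-p 0) ≠ 0 := mul_ne_zero (hqne 0) (Complex.exp_ne_zero _)
  refine ⟨fun z => p z + Complex.log (q 0 * Complex.exp (-p 0)),
    fun z => (hp' z).differentiableAt.add_const _, ?_⟩
  intro z
  rw [hGq, Complex.exp_add, Complex.exp_log hc, ← hconst z, mul_left_comm, ← Complex.exp_add,
    add_neg_cancel, Complex.exp_zero, mul_one]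

theorem le_exp_of_logPlus_le {x y : ℝ} (h : logPlus x ≤ y) : x ≤ Real.exp y := by
  have h1 : 0 < max 1 x := lt_of_lt_of_le one_pos (le_max_left _ _)
  calc x ≤ max 1 x := le_max_right _ _
    _ = Real.exp (logPlus x) := (Real.exp_log h1).symm
    _ ≤ _ := Real.exp_le_exp.2 h

/-- Hyper-order less than one gives a bound `exp (exp (r ^ ρ))` with `ρ < 1`. -/
theorem exists_norm_sub_le_exp_exp_rpow {f : ℂ → ℂ} (hf : Differentiable ℂ f)
    (hρ : hyperOrder f < 1) (a : ℂ) :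
    ∃ ρ : ℝ, 0 < ρ ∧ ρ < 1 ∧ ∀ᶠ r : ℝ in atTop, ∀ z ∈ closedBall (0 : ℂ) r,
      ‖f z - a‖ ≤ Real.exp (Real.exp (r ^ ρ)) := by
  obtain ⟨b, hb, hb1⟩ := exists_between hρ
  have hbt : b ≠ ⊤ := (hb1.trans ENNReal.one_lt_top).ne
  have hβ1 : b.toReal < 1 := by
    rw [← ENNReal.toReal_one]
    exact (ENNReal.toReal_lt_toReal hbt ENNReal.one_ne_top).2 hb1
  set β := b.toReal with hβ
  have hβ0 : 0 ≤ β := ENNReal.toReal_nonneg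
  refine ⟨(β + 1) / 2, by linarith, by linarith, ?_⟩
  have hev := eventually_lt_of_limsup_lt hb
  have hgap : ∀ᶠ r : ℝ in atTop, r ^ β + ‖a‖ ≤ r ^ ((β + 1) / 2) := by
    have h1 : Tendsto (fun r : ℝ => r ^ ((1 - β) / 2)) atTop atTop :=
      tendsto_rpow_atTop (by linarith)
    filter_upwards [h1.eventually_ge_atTop (1 + ‖a‖), eventually_ge_atTop 1] with r hr hr1
    have h2 : r ^ ((β + 1) / 2) = r ^ β * r ^ ((1 - β) / 2) := by
      rw [← Real.rpow_add (by linarith)]; ring_nf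
    have h3 : 1 ≤ r ^ β := Real.one_le_rpow hr1 hβ0
    rw [h2]
    nlinarith [norm_nonneg a]
  filter_upwards [hev, hgap, eventually_gt_atTop 1] with r hr hr2 hr1
  have hlog : 0 < Real.log r := Real.log_pos hr1
  have h1 : logPlus (logPlus (logPlus (maxMod f r))) / Real.log r ≤ β :=
    ((ENNReal.ofReal_lt_iff_lt_toReal (by
      refine div_nonneg (Real.log_nonneg (le_max_left _ _)) hlog.le) hbt).1 hr).le
  rw [div_le_iff₀ hlog] at h1
  have h2 : Real.exp (β * Real.log r) = r ^ β := by
    rw [Real.rpow_def_of_pos (by linarith), mul_comm]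
  have h3 := le_exp_of_logPlus_le (le_exp_of_logPlus_le (h2 ▸ le_exp_of_logPlus_le h1))
  have hsph : ∀ z ∈ frontier (ball (0:ℂ) r), ‖f z‖ ≤ Real.exp (Real.exp (r ^ β)) := by
    intro z hz
    rw [frontier_ball _ (by linarith)] at hz
    refine le_trans ?_ h3
    exact le_csSup ((isCompact_sphere _ _).image (hf.continuous.norm)).bddAbove
      (mem_image_of_mem _ hz)
  intro z hz
  have h4 : ‖f z‖ ≤ Real.exp (Real.exp (r ^ β)) :=
    Complex.norm_le_of_forall_mem_frontier_norm_le isBounded_ball hf.diffContOnCl hsph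
      (by rwa [closure_ball _ (by linarith)])
  have hE := Real.add_one_le_exp (r ^ β)
  have ha := Real.add_one_le_exp ‖a‖
  have hr0 : 0 ≤ r ^ β := Real.rpow_nonneg (by linarith) _
  calc ‖f z - a‖ ≤ ‖f z‖ + ‖a‖ := norm_sub_le _ _
    _ ≤ Real.exp (Real.exp (r ^ β)) + ‖a‖ := by gcongr
    _ ≤ Real.exp (Real.exp (r ^ β)) * Real.exp ‖a‖ := by
      have := Real.one_le_exp (Real.exp_pos (r ^ β)).le
      nlinarith [norm_nonneg a]
    _ = Real.exp (Real.exp (r ^ β) + ‖a‖) := (Real.exp_add _ _).symm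
    _ ≤ Real.exp (Real.exp (r ^ β) * Real.exp ‖a‖) := by
      refine Real.exp_le_exp.2 ?_
      nlinarith [norm_nonneg a]
    _ = Real.exp (Real.exp (r ^ β + ‖a‖)) := by rw [← Real.exp_add]
    _ ≤ _ := by gcongr

/-- A nonconstant entire function has real part of size at least `r ^ σ`, `σ < 1`, on a sequence
of discs. -/
theorem frequently_rpow_le_re_of_deriv_ne_zero {h : ℂ → ℂ} (hh : Differentiable ℂ h) {w₀ : ℂ}
    (hw₀ : deriv h w₀ ≠ 0) {σ : ℝ} (hσ : σ < 1) :
    ∃ᶠ r : ℝ in atTop, ∃ w, ‖w‖ ≤ r ∧ r ^ σ ≤ (h w).re := by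
  intro hcon
  refine hw₀ (norm_le_zero_iff.1 ?_)
  have h1 : Tendsto (fun r : ℝ => 24 * r ^ (σ - 1) + 24 * (|(h 0).re| + 1) / r) atTop
      (nhds (24 * 0 + 0)) := by
    refine Tendsto.add ?_ (tendsto_const_nhds.div_atTop tendsto_id)
    have := tendsto_rpow_neg_atTop (show 0 < 1 - σ by linarith)
    rw [neg_sub] at this
    exact this.const_mul 24
  rw [mul_zero, add_zero] at h1
  refine ge_of_tendsto h1 ?_
  filter_upwards [hcon, eventually_ge_atTop 1, eventually_ge_atTop (2 * ‖w₀‖)] with r hr hr1 hr2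
  push Not at hr
  have hrσ : 0 ≤ r ^ σ := Real.rpow_nonneg (by linarith) _
  have := norm_deriv_le_of_re_le hh (z₀ := 0) (A := r ^ σ + (|(h 0).re| + 1)) (ρ := r)
    (by positivity) (by linarith) (by
      intro z hz
      rw [mem_ball_zero_iff] at hz
      linarith [hr z hz.le, neg_abs_le (h 0).re]) (w := w₀) (by rw [dist_zero_right]; linarith)
  refine this.trans (le_of_eq ?_)
  rw [Real.rpow_sub_one (by linarith)]
  ring

/-- An entire function which is not affine has real part of size at least `r ^ σ`, `σ < 2`, on a
sequence of discs. -/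
theorem frequently_rpow_le_re_of_deriv_ne {h : ℂ → ℂ} (hh : Differentiable ℂ h) {w₀ : ℂ}
    (hw₀ : deriv h w₀ ≠ deriv h 0) {σ : ℝ} (hσ : σ < 2) :
    ∃ᶠ r : ℝ in atTop, ∃ w, ‖w‖ ≤ r ∧ r ^ σ ≤ (h w).re := by
  intro hcon
  refine hw₀ (sub_eq_zero.1 (norm_le_zero_iff.1 ?_))
  have h1 : Tendsto (fun r : ℝ => 96 * ‖w₀‖ * r ^ (σ - 2) + 96 * ‖w₀‖ * (|(h 0).re| + 1) / r ^ 2)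
      atTop (nhds (96 * ‖w₀‖ * 0 + 0)) := by
    refine Tendsto.add ?_ (tendsto_const_nhds.div_atTop (tendsto_pow_atTop (by norm_num)))
    have := tendsto_rpow_neg_atTop (show 0 < 2 - σ by linarith)
    rw [neg_sub] at this
    exact this.const_mul _
  rw [mul_zero, add_zero] at h1
  refine ge_of_tendsto h1 ?_
  filter_upwards [hcon, eventually_ge_atTop 1, eventually_gt_atTop (2 * ‖w₀‖)] with r hr hr1 hr2
  push Not at hr
  have hrσ : 0 ≤ r ^ σ := Real.rpow_nonneg (by linarith) _
  have := norm_deriv_sub_le_of_re_le hh (z₀ := 0) (A := r ^ σ + (|(h 0).re| + 1)) (ρ := r)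
    (by positivity) (by linarith) (by
      intro z hz
      rw [mem_ball_zero_iff] at hz
      linarith [hr z hz.le, neg_abs_le (h 0).re]) (w := w₀) (by rw [dist_zero_right]; linarith)
  refine this.trans (le_of_eq ?_)
  rw [dist_zero_right, Real.rpow_sub (by linarith), Real.rpow_two]
  ring

/-- A nonconstant entire function takes a purely imaginary value. -/
theorem exists_re_eq_zero {h : ℂ → ℂ} (hh : Differentiable ℂ h) {w₀ : ℂ}
    (hw₀ : deriv h w₀ ≠ 0) : ∃ b, (h b).re = 0 := by
  have key : ∀ g : ℂ → ℂ, Differentiable ℂ g → deriv g w₀ ≠ 0 → ∃ w, 0 < (g w).re := by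
    intro g hg hg0
    obtain ⟨r, ⟨w, _, hw⟩, hr⟩ := ((frequently_rpow_le_re_of_deriv_ne_zero hg hg0
      (σ := 1 / 2) (by norm_num)).and_eventually (eventually_gt_atTop 0)).exists
    exact ⟨w, (Real.rpow_pos_of_pos hr _).trans_le hw⟩
  obtain ⟨w, hw⟩ := key h hh hw₀
  obtain ⟨v, hv⟩ := key (fun z => -h z) hh.neg (by rwa [deriv.fun_neg, neg_ne_zero])
  rw [Complex.neg_re] at hv
  have := isPreconnected_univ.intermediate_value (mem_univ v) (mem_univ w)
    (f := fun z => (h z).re) (Complex.continuous_re.comp hh.continuous).continuousOn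
  obtain ⟨b, _, hb⟩ := this ⟨by linarith, hw.le⟩
  exact ⟨b, hb⟩

theorem eventually_const_mul_pow_le_exp (C : ℝ) (n : ℕ) {γ : ℝ} (hγ : 0 < γ) :
    ∀ᶠ R : ℝ in atTop, C * R ^ n ≤ Real.exp (γ * R) := by
  have h := ((isLittleO_pow_exp_pos_mul_atTop (k := n) hγ).const_mul_left C).def one_pos
  filter_upwards [h] with R hR
  rw [one_mul, Real.norm_eq_abs, Real.norm_eq_abs, abs_of_pos (Real.exp_pos _)] at hR
  exact (le_abs_self _).trans hR

theorem eventually_mul_rpow_le {ρ σ : ℝ} (hρσ : ρ < σ) {c : ℝ} (hc : 0 ≤ c) {γ : ℝ}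
    (hγ : 0 < γ) : ∀ᶠ r : ℝ in atTop, (c * r) ^ ρ ≤ γ * r ^ σ := by
  have h1 : Tendsto (fun r : ℝ => γ * r ^ (σ - ρ)) atTop atTop :=
    (tendsto_rpow_atTop (sub_pos.2 hρσ)).const_mul_atTop hγ
  filter_upwards [h1.eventually_ge_atTop (c ^ ρ), eventually_gt_atTop 0] with r hr hr0
  have h2 : r ^ σ = r ^ (σ - ρ) * r ^ ρ := by rw [← Real.rpow_add hr0]; ring_nf
  rw [Real.mul_rpow hc hr0.le, h2, ← mul_assoc]
  exact mul_le_mul_of_nonneg_right hr (Real.rpow_nonneg hr0.le _)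

theorem iteratedDeriv_const_mul_comp_add_div {F : ℂ → ℂ} (hF : Differentiable ℂ F) (c p L : ℂ)
    (k : ℕ) (s : ℂ) :
    iteratedDeriv k (fun s => c * F (p + s / L)) s
      = c / L ^ k * iteratedDeriv k F (p + s / L) := by
  induction k generalizing s with
  | zero => simp
  | succ k ih =>
    rw [iteratedDeriv_succ, funext ih]
    have h1 : HasDerivAt (fun s : ℂ => p + s / L) (1 / L) s :=
      ((hasDerivAt_id s).div_const L).const_add p
    have h2 := ((hasDerivAt_iteratedDeriv hF k (p + s / L)).comp s h1).const_mul (c / L ^ k)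
    exact h2.deriv.trans (by ring)

/-- Rescaling turns `F⁽ᵏ⁾ = exp h * F + a` into `φ⁽ᵏ⁾ = exp η * φ + 1`. -/
theorem iteratedDeriv_rescale_eq {F h : ℂ → ℂ} (hF : Differentiable ℂ F) {k : ℕ} {a : ℂ}
    (ha : a ≠ 0) (hode : ∀ z, iteratedDeriv k F z = Complex.exp (h z) * F z + a) {L : ℂ}
    (hL : L ≠ 0) (p s : ℂ) :
    iteratedDeriv k (fun s => L ^ k / a * F (p + s / L)) s
      = Complex.exp (h (p + s / L) - k * Complex.log L) * (L ^ k / a * F (p + s / L)) + 1 := by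
  rw [iteratedDeriv_const_mul_comp_add_div hF, hode, Complex.exp_sub, Complex.exp_nat_mul,
    Complex.exp_log hL]
  have := pow_ne_zero k hL
  field_simp

/-- On a disc where `h'` is close to `L`, the rescaling of `h` is close to a translation. -/
theorem norm_rescale_sub_sub_le {h : ℂ → ℂ} (hh : Differentiable ℂ h) {z₀ L p : ℂ} {δ x T : ℝ}
    (hδ : 0 < δ) (hL : L ≠ 0)
    (hd : ∀ z ∈ ball z₀ δ, ‖deriv h z - L‖ ≤ ‖L‖ * (dist z z₀ / (10 * δ)))
    (hp : ‖L‖ * dist p z₀ ≤ x) (hT : x + T < ‖L‖ * δ) {s t : ℂ}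
    (hs : s ∈ closedBall (0 : ℂ) T) (ht : t ∈ closedBall (0 : ℂ) T) :
    ‖(h (p + s / L) - s) - (h (p + t / L) - t)‖ ≤ (x + T) / (10 * (‖L‖ * δ)) * ‖s - t‖ := by
  have hL0 : 0 < ‖L‖ := norm_pos_iff.2 hL
  refine (convex_closedBall (0 : ℂ) T).norm_image_sub_le_of_norm_hasDerivWithin_le
    (f := fun s => h (p + s / L) - s) (f' := fun s => deriv h (p + s / L) * (1 / L) - 1)
    (fun u _ => ?_) (fun u hu => ?_) ht hs
  · have h1 : HasDerivAt (fun s : ℂ => p + s / L) (1 / L) u :=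
      ((hasDerivAt_id u).div_const L).const_add p
    exact (((hh _).hasDerivAt.comp u h1).sub (hasDerivAt_id u)).hasDerivWithinAt
  · rw [mem_closedBall_zero_iff] at hu
    have h2 : ‖L‖ * dist (p + u / L) z₀ ≤ x + T := by
      have : dist (p + u / L) z₀ ≤ dist p z₀ + ‖u‖ / ‖L‖ := by
        rw [dist_eq_norm, dist_eq_norm, ← norm_div, add_sub_right_comm]
        exact norm_add_le _ _
      calc ‖L‖ * dist (p + u / L) z₀ ≤ ‖L‖ * (dist p z₀ + ‖u‖ / ‖L‖) := by gcongr
        _ = ‖L‖ * dist p z₀ + ‖u‖ := by field_simp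
        _ ≤ _ := by linarith
    have h3 := hd (p + u / L) (by
      rw [mem_ball]
      exact lt_of_mul_lt_mul_left (h2.trans_lt hT) hL0.le)
    have h4 : deriv h (p + u / L) * (1 / L) - 1 = (deriv h (p + u / L) - L) / L := by
      field_simp
    rw [h4, norm_div, div_le_iff₀ hL0]
    refine h3.trans ?_
    calc ‖L‖ * (dist (p + u / L) z₀ / (10 * δ)) = (‖L‖ * dist (p + u / L) z₀) / (10 * δ) := by ring
      _ ≤ (x + T) / (10 * δ) := by gcongr
      _ = _ := by field_simp

/-- The case of affine `h`. -/
theorem not_of_iteratedDeriv_eq_exp_affine {F : ℂ → ℂ} (hF : Differentiable ℂ F) {k : ℕ}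
    (hk : 1 ≤ k) {a α β : ℂ} (ha : a ≠ 0) (hα : α ≠ 0)
    (hode : ∀ z, iteratedDeriv k F z = Complex.exp (α * z + β) * F z + a) {ρ : ℝ} (hρ0 : 0 < ρ)
    (hρ : ρ < 1) : ¬ ∀ᶠ r : ℝ in atTop, ∀ z ∈ closedBall (0 : ℂ) r,
      ‖F z‖ ≤ Real.exp (Real.exp (r ^ ρ)) := by
  intro hgr
  obtain ⟨r₁, hr₁⟩ := eventually_atTop.1 (hgr.and (eventually_ge_atTop 0))
  have hr₁0 : 0 ≤ r₁ := (hr₁ r₁ le_rfl).2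
  have hα0 : 0 < ‖α‖ := norm_pos_iff.2 hα
  set p : ℂ := (k * Complex.log α - β) / α with hp
  set b : ℝ := r₁ + ‖p‖ with hb
  have hb0 : 0 ≤ b := by positivity
  set D : ℝ := ‖α ^ k / a‖ with hD
  have hD0 : 0 < D := norm_pos_iff.2 (div_ne_zero (pow_ne_zero _ hα) ha)
  set Λ : ℝ → ℝ := fun x => Real.log D + Real.exp ((b + max x 0 / ‖α‖) ^ ρ) with hΛdef
  have hΛm : Monotone Λ := by
    intro x y hxy
    simp only [hΛdef]
    gcongr
  have hk0 : (0 : ℝ) < k := by exact_mod_cast hk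
  have hΛ : ∀ᶠ M in atTop, Λ (20 * M) ≤ Real.exp (1 / (4 * k) * M) := by
    have hγ : (0 : ℝ) < 1 / (8 * k) := by positivity
    filter_upwards [eventually_mul_rpow_le hρ (c := b + 20 / ‖α‖) (by positivity) hγ,
      eventually_const_mul_pow_le_exp (max (Real.log D) 0 + 1) 0 hγ, eventually_ge_atTop 1]
      with M h1 h2 hM
    simp only [hΛdef]
    rw [Real.rpow_one] at h1
    rw [pow_zero, mul_one] at h2
    have h3 : (b + max (20 * M) 0 / ‖α‖) ^ ρ ≤ 1 / (8 * k) * M := by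
      refine le_trans (Real.rpow_le_rpow (by positivity) ?_ hρ0.le) h1
      rw [max_eq_left (by linarith), add_mul, div_mul_eq_mul_div]
      gcongr
      nlinarith
    have h4 : Real.exp (1 / (4 * k) * M)
        = Real.exp (1 / (8 * k) * M) * Real.exp (1 / (8 * k) * M) := by
      rw [← Real.exp_add]; congr 1; field_simp; ring
    have h5 := Real.exp_le_exp.2 h3
    have h6 := le_max_left (Real.log D) 0
    have h7 := le_max_right (Real.log D) 0
    have h8 := Real.one_le_exp (show 0 ≤ 1 / (8 * k) * M by positivity)
    rw [h4]
    nlinarith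
  obtain ⟨M, hM0, ε, hε, H⟩ := exists_forall_not_solution hk hΛm hΛ
  have hη : ∀ s : ℂ, α * (p + s / α) + β - k * Complex.log α = s := by
    intro s
    rw [hp]
    field_simp
    ring
  refine H (fun s => α ^ k / a * F (p + s / α)) (fun s => s) 0 ?_ ?_ ?_ ?_
  · fun_prop
  · intro s _
    simpa using hε.le
  · intro s _
    have := iteratedDeriv_rescale_eq (h := fun z => α * z + β) hF ha hode hα p s
    simp only [hη] at this
    exact this
  · intro s _
    have h1 := (hr₁ (b + ‖s‖ / ‖α‖) (by
      have : 0 ≤ ‖s‖ / ‖α‖ := by positivity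
      linarith [norm_nonneg p])).1 (p + s / α) (by
        rw [mem_closedBall_zero_iff]
        refine (norm_add_le _ _).trans ?_
        rw [norm_div s α]
        linarith)
    rw [norm_mul, ← hD]
    simp only [hΛdef]
    rw [max_eq_left (norm_nonneg s), Real.exp_add, Real.exp_log hD0]
    gcongr

theorem eventually_forall_le_of_radius (k : ℕ) {κ γ ε : ℝ} (hκ : 0 < κ) (hγ : 0 < γ)
    (hε : 0 < ε) (R₀ M a : ℝ) :
    ∀ᶠ R : ℝ in atTop, R₀ ≤ R / 2 ∧ 2 ≤ R ∧ 320 * M ≤ R ∧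
      20 * M * (20 * M) ≤ 5 * ε * R ∧ (6400000000 * R ^ 2) ^ (2 * k) ≤ Real.exp (γ * R) ∧
      (6400000000 * R ^ 2) ^ k / a ≤ Real.exp (1 * R) ∧
      R ≤ Real.exp (κ / 2 * √(R / 2)) := by
  have h1 : Tendsto (fun R : ℝ => √(R / 2)) atTop atTop :=
    Real.tendsto_sqrt_atTop.comp (tendsto_id.atTop_div_const two_pos)
  filter_upwards [eventually_ge_atTop (2 * R₀), eventually_ge_atTop 2,
    eventually_ge_atTop (320 * M), eventually_ge_atTop (20 * M * (20 * M) / (5 * ε)),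
    eventually_const_mul_pow_le_exp (6400000000 ^ (2 * k)) (2 * (2 * k)) hγ,
    eventually_const_mul_pow_le_exp (6400000000 ^ k / a) (2 * k) one_pos,
    h1.eventually (eventually_const_mul_pow_le_exp 2 2 (half_pos hκ))]
    with R e1 e2 e3 e4 e5 e6 e7
  refine ⟨by linarith, e2, e3, ?_, ?_, ?_, ?_⟩
  · rwa [div_le_iff₀' (by positivity)] at e4
  · rwa [mul_pow, ← pow_mul]
  · rwa [mul_pow, ← pow_mul, mul_div_right_comm]
  · rw [Real.sq_sqrt (by linarith)] at e7
    linarith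

set_option maxHeartbeats 1000000 in
/-- The case of a non-affine `h`. -/
theorem not_of_iteratedDeriv_eq_exp_nonaffine {F h : ℂ → ℂ} (hF : Differentiable ℂ F)
    (hh : Differentiable ℂ h) {k : ℕ} (hk : 1 ≤ k) {a w₀ : ℂ} (ha : a ≠ 0)
    (hode : ∀ z, iteratedDeriv k F z = Complex.exp (h z) * F z + a)
    (hw₀ : deriv h w₀ ≠ deriv h 0) {b : ℂ} (hb : (h b).re = 0) {ρ : ℝ} (hρ0 : 0 < ρ)
    (hρ : ρ < 1) : ¬ ∀ᶠ r : ℝ in atTop, ∀ z ∈ closedBall (0 : ℂ) r,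
      ‖F z‖ ≤ Real.exp (Real.exp (r ^ ρ)) := by
  intro hgr
  have hk0 : (0 : ℝ) < k := by exact_mod_cast hk
  have ha0 : 0 < ‖a‖ := norm_pos_iff.2 ha
  obtain ⟨κ, hκ, C, hC, R₀, hR₀, H1⟩ := exists_norm_le_exp_add_mul_norm hk
  obtain ⟨M, hM, ε, hε, H2⟩ := exists_forall_not_solution hk (Λ := fun x => C + 11 * x)
    (fun x y hxy => by dsimp only; linarith) (by
      filter_upwards [eventually_const_mul_pow_le_exp (C + 220) 1
        (show (0 : ℝ) < 1 / (4 * k) by positivity), eventually_ge_atTop 1] with M h1 h2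
      nlinarith)
  obtain ⟨γ, hγ, hγ4, hγε⟩ : ∃ γ > (0 : ℝ), γ ≤ 1 / 4 ∧ γ * (20 * M) ≤ 5 * ε := by
    refine ⟨min (1 / 4) (ε / (4 * M)), by positivity, min_le_left _ _, ?_⟩
    calc min (1 / 4) (ε / (4 * M)) * (20 * M) ≤ ε / (4 * M) * (20 * M) := by
          gcongr; exact min_le_right _ _
      _ = 5 * ε := by field_simp; norm_num
  obtain ⟨R₁, hR₁⟩ := eventually_atTop.1
    (eventually_forall_le_of_radius k hκ hγ hε R₀ M ‖a‖)
  have hgap : ∀ᶠ r : ℝ in atTop, (4 * r) ^ ρ ≤ κ / 2 * √(r ^ (1 + ρ) / 640000 / 2) := by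
    filter_upwards [eventually_mul_rpow_le (show ρ < (1 + ρ) / 2 by linarith) (c := 4)
      (by norm_num) (show 0 < κ / 2 * √(1 / 640000 / 2) by positivity),
      eventually_ge_atTop 0] with r h1 h2
    refine h1.trans (le_of_eq ?_)
    have h3 : r ^ (1 + ρ) / 640000 / 2 = 1 / 640000 / 2 * r ^ (1 + ρ) := by ring
    rw [h3, Real.sqrt_mul (by norm_num), mul_assoc, Real.sqrt_eq_rpow (r ^ (1 + ρ)),
      ← Real.rpow_mul h2]
    ring_nf
  have hbig : ∀ᶠ r : ℝ in atTop, max R₁ 1 ≤ r ^ (1 + ρ) / 640000 :=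
    ((tendsto_rpow_atTop (by linarith)).atTop_div_const (by norm_num)).eventually_ge_atTop _
  have hL1ev : ∀ᶠ r : ℝ in atTop, 64 ≤ r ^ ρ := (tendsto_rpow_atTop hρ0).eventually_ge_atTop _
  obtain ⟨r, ⟨w, hwr, hw⟩, hgr', hgap', hbig', hr64, hr1, hbr⟩ :=
    ((frequently_rpow_le_re_of_deriv_ne hh hw₀ (show 1 + ρ < 2 by linarith)).and_eventually
      (((tendsto_id.const_mul_atTop (show (0 : ℝ) < 4 by norm_num)).eventually hgr).and
        (hgap.and (hbig.and (hL1ev.and ((eventually_ge_atTop 1).and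
          (eventually_ge_atTop ‖b‖))))))).exists
  have hr0 : 0 < r := by linarith
  have hrσ : 0 < r ^ (1 + ρ) := Real.rpow_pos_of_pos hr0 _
  obtain ⟨z₀, δ, hδ, hz₀, hδr, hAL, hAR, hLR, hd⟩ :=
    exists_almost_affine_disc hh hr0 hwr hbr (hrσ.trans_le hw) hb
  set A := (h w).re with hA
  set L := deriv h z₀ with hL
  set R := ‖L‖ * δ with hR
  have hRr : r ^ (1 + ρ) / 640000 ≤ R := by
    rw [div_le_iff₀ (by norm_num)]; linarith
  obtain ⟨hRR₀, hR1, hRM, hRε, hRγ, hRk, hRs⟩ :=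
    hR₁ R ((le_max_left _ _).trans (hbig'.trans hRr))
  have hRpos : 0 < R := by linarith
  have hrA : 1 ≤ r * A := by
    have : 1 ≤ r ^ (1 + ρ) := Real.one_le_rpow hr1 (by linarith)
    nlinarith
  have hL1 : 1 ≤ ‖L‖ := by
    rw [Real.rpow_add hr0, Real.rpow_one] at hw
    have : r * 64 ≤ r * (64 * ‖L‖) := by
      calc r * 64 ≤ r * r ^ ρ := by gcongr
        _ ≤ _ := by linarith
    linarith [le_of_mul_le_mul_left this hr0]
  have hL0 : L ≠ 0 := norm_pos_iff.1 (by linarith)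
  have hLle : ‖L‖ ≤ 6400000000 * R ^ 2 := by nlinarith [norm_nonneg L]
  set ℓ := 2 * k * Real.log ‖L‖ with hℓ
  have hlog0 : 0 ≤ Real.log ‖L‖ := Real.log_nonneg hL1
  have hℓ0 : 0 ≤ ℓ := by positivity
  have hℓR : ℓ ≤ γ * R := by
    have h1 : ‖L‖ ^ (2 * k) ≤ Real.exp (γ * R) :=
      le_trans (pow_le_pow_left₀ (norm_nonneg _) hLle _) hRγ
    have h2 := Real.log_le_log (by positivity) h1
    rw [Real.log_exp, Real.log_pow] at h2
    push_cast at h2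
    exact h2
  have hℓ4 : ℓ ≤ R / 4 := hℓR.trans (by nlinarith)
  obtain ⟨x, hx0, hxℓ, hx⟩ : ∃ x : ℝ, 0 ≤ x ∧ x ≤ ℓ ∧
      (h (z₀ + (x : ℂ) / L)).re = k * Real.log ‖L‖ := by
    have hc : ContinuousOn (fun x : ℝ => (h (z₀ + (x : ℂ) / L)).re) (Icc 0 ℓ) := by
      have := hh.continuous
      fun_prop
    have h1 := norm_rescale_sub_sub_le hh (p := z₀) (x := 0) (T := ℓ) hδ hL0 hd (by simp)
      (by rw [← hR]; linarith) (s := (ℓ : ℂ)) (t := 0)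
      (by simp [abs_of_nonneg hℓ0]) (by simpa using hℓ0)
    have h2 : ‖(h (z₀ + (ℓ : ℂ) / L) - ℓ) - h z₀‖ ≤ ℓ / 2 := by
      simp only [zero_div, add_zero, sub_zero, zero_add, Complex.norm_real, Real.norm_eq_abs,
        abs_of_nonneg hℓ0, ← hR] at h1
      refine h1.trans ?_
      have : ℓ / (10 * R) ≤ 1 / 2 := by
        rw [div_le_iff₀ (by positivity)]; linarith
      nlinarith
    have h3 := (Complex.abs_re_le_norm _).trans h2
    simp only [Complex.sub_re, Complex.ofReal_re, hz₀, sub_zero] at h3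
    obtain ⟨x, ⟨hx0, hx1⟩, hx⟩ := intermediate_value_Icc hℓ0 hc (show k * Real.log ‖L‖ ∈
      Icc ((h (z₀ + ((0 : ℝ) : ℂ) / L)).re) ((h (z₀ + (ℓ : ℂ) / L)).re) from ⟨by
        simp only [Complex.ofReal_zero, zero_div, add_zero, hz₀]; positivity, by
        have := (abs_le.1 h3).1
        have : k * Real.log ‖L‖ = ℓ / 2 := by rw [hℓ]; ring
        linarith⟩)
    exact ⟨x, hx0, hx1, hx⟩
  set p := z₀ + (x : ℂ) / L with hp
  have hpz : ‖L‖ * dist p z₀ ≤ x := by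
    rw [hp, dist_self_add_left, norm_div, Complex.norm_real, Real.norm_eq_abs,
      abs_of_nonneg hx0]
    refine le_of_eq ?_
    field_simp
  set φ : ℂ → ℂ := fun s => L ^ k / a * F (p + s / L) with hφ
  set η : ℂ → ℂ := fun s => h (p + s / L) - k * Complex.log L with hη
  have hφd : Differentiable ℂ φ := by
    simp only [hφ]; fun_prop
  have hηd : Differentiable ℂ η := by
    simp only [hη]; fun_prop
  have hφη : ∀ s, iteratedDeriv k φ s = Complex.exp (η s) * φ s + 1 :=
    iteratedDeriv_rescale_eq hF ha hode hL0 p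
  have hη0 : (η 0).re = 0 := by
    simp [hη, hx, Complex.log_re]
  have hηlip : ∀ T, x + T < R → ∀ s ∈ closedBall (0 : ℂ) T, ∀ t ∈ closedBall (0 : ℂ) T,
      ‖(η s - s) - (η t - t)‖ ≤ (x + T) / (10 * R) * ‖s - t‖ := by
    intro T hT s hs t ht
    refine le_of_eq_of_le ?_ (norm_rescale_sub_sub_le hh hδ hL0 hd hpz hT hs ht)
    congr 1
    simp only [hη]
    ring
  have hφb : ∀ s ∈ closedBall (0 : ℂ) (R / 2), ‖φ s‖ ≤ Real.exp (Real.exp (κ * √(R / 2))) := by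
    intro s hs
    rw [mem_closedBall_zero_iff] at hs
    have h1 : ‖p + s / L‖ ≤ 4 * r := by
      have h2 : ‖(x : ℂ) / L + s / L‖ ≤ δ := by
        rw [← add_div, norm_div, div_le_iff₀ (by linarith), mul_comm δ, ← hR]
        refine (norm_add_le _ _).trans ?_
        rw [Complex.norm_real, Real.norm_eq_abs, abs_of_nonneg hx0]
        linarith
      rw [hp, add_assoc]
      exact (norm_add_le _ _).trans (by linarith)
    have h3 := hgr' (p + s / L) (by rwa [mem_closedBall_zero_iff])
    set u := κ / 2 * √(R / 2) with hu
    have h4 : (id (4 * r)) ^ ρ ≤ u := by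
      refine hgap'.trans ?_
      rw [hu]
      gcongr
    have h5 : Real.exp (κ * √(R / 2)) = Real.exp u * Real.exp u := by
      rw [← Real.exp_add, hu]; congr 1; ring
    have h6 : ‖L ^ k / a‖ ≤ Real.exp (Real.exp u) := by
      rw [norm_div, norm_pow]
      calc ‖L‖ ^ k / ‖a‖ ≤ (6400000000 * R ^ 2) ^ k / ‖a‖ := by gcongr
        _ ≤ Real.exp (1 * R) := hRk
        _ ≤ _ := by rw [one_mul]; exact Real.exp_le_exp.2 hRs
    calc ‖φ s‖ = ‖L ^ k / a‖ * ‖F (p + s / L)‖ := norm_mul _ _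
      _ ≤ Real.exp (Real.exp u) * Real.exp (Real.exp u) := by
        gcongr
        exact h3.trans (Real.exp_le_exp.2 (Real.exp_le_exp.2 h4))
      _ = Real.exp (Real.exp u + Real.exp u) := (Real.exp_add _ _).symm
      _ ≤ _ := by
        rw [h5]
        refine Real.exp_le_exp.2 ?_
        nlinarith
  have hfin := H1 φ η hφd hηd (R / 2) hRR₀ (fun s hs t ht => by
    refine (hηlip (R / 2) (by linarith) s hs t ht).trans ?_
    refine mul_le_mul_of_nonneg_right ?_ (norm_nonneg _)
    rw [div_le_div_iff₀ (by positivity) (by norm_num)]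
    linarith) (fun s _ => hφη s) hη0 hφb
  refine H2 φ η (η 0).im hφd (fun s hs => ?_) (fun s _ => hφη s) (fun s hs => ?_)
  · have h1 := hηlip (20 * M) (by linarith) s hs 0 (by
      rw [mem_closedBall_zero_iff, norm_zero]; positivity)
    rw [mem_closedBall_zero_iff] at hs
    have h2 : η s - s - (η 0).im * Complex.I = (η s - s) - (η 0 - 0) := by
      conv_rhs => rw [← Complex.re_add_im (η 0), hη0]
      simp
    rw [h2]
    refine h1.trans ?_
    rw [sub_zero, div_mul_eq_mul_div, div_le_iff₀ (by positivity)]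
    calc (x + 20 * M) * ‖s‖ ≤ (γ * R + 20 * M) * (20 * M) := by
          gcongr
          exact hxℓ.trans hℓR
      _ = γ * (20 * M) * R + 20 * M * (20 * M) := by ring
      _ ≤ 5 * ε * R + 5 * ε * R := by gcongr
      _ = ε * (10 * R) := by ring
  · refine hfin s (closedBall_subset_closedBall ?_ hs)
    linarith

theorem eventually_forall_le_of_gain (k : ℕ) (hk : 1 ≤ k) :
    ∀ᶠ R : ℝ in atTop, 1 ≤ R ∧ 512000000000 * R ≤ Real.exp R ∧
      5 * R ≤ Real.exp (1 / (16 * k) * R) ∧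
      6 * k.factorial * (Real.exp (1 / (8 * k) * R) * (32 * 6400000000 * R)) ^ k
        ≤ Real.exp (1 / 4 * R) := by
  have hk0 : (0 : ℝ) < k := by exact_mod_cast hk
  filter_upwards [eventually_ge_atTop 1,
    eventually_const_mul_pow_le_exp 512000000000 1 one_pos,
    eventually_const_mul_pow_le_exp 5 1 (show (0 : ℝ) < 1 / (16 * k) by positivity),
    eventually_const_mul_pow_le_exp (6 * k.factorial * (32 * 6400000000) ^ k) k
      (show (0 : ℝ) < 1 / 8 by norm_num)] with R e1 e2 e3 e4
  rw [pow_one, one_mul] at e2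
  rw [pow_one] at e3
  refine ⟨e1, e2, e3, ?_⟩
  have h1 : Real.exp (1 / (8 * k) * R) ^ k = Real.exp (1 / 8 * R) := by
    rw [← Real.exp_nat_mul]; congr 1; field_simp
  calc 6 * k.factorial * (Real.exp (1 / (8 * k) * R) * (32 * 6400000000 * R)) ^ k
      = Real.exp (1 / 8 * R) * (6 * k.factorial * (32 * 6400000000) ^ k * R ^ k) := by
        rw [mul_pow, h1, mul_pow]; ring
    _ ≤ Real.exp (1 / 8 * R) * Real.exp (1 / 8 * R) := by gcongr
    _ = _ := by rw [← Real.exp_add]; congr 1; ring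

set_option maxHeartbeats 1000000 in
/-- The homogeneous equation has no nontrivial solution of slow growth when `h` is not constant. -/
theorem not_of_iteratedDeriv_eq_exp_mul {F h : ℂ → ℂ} (hF : Differentiable ℂ F)
    (hh : Differentiable ℂ h) {k : ℕ} (hk : 1 ≤ k) {y w₀ : ℂ} (hy : F y ≠ 0)
    (hode : ∀ z, iteratedDeriv k F z = Complex.exp (h z) * F z)
    (hw₀ : deriv h w₀ ≠ 0) {b : ℂ} (hb : (h b).re = 0) {ρ : ℝ} (hρ0 : 0 < ρ)
    (hρ : ρ < 1) : ¬ ∀ᶠ r : ℝ in atTop, ∀ z ∈ closedBall (0 : ℂ) r,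
      ‖F z‖ ≤ Real.exp (Real.exp (r ^ ρ)) := by
  intro hgr
  have hk0 : (0 : ℝ) < k := by exact_mod_cast hk
  set σ : ℝ := (1 + ρ) / 2 with hσ
  obtain ⟨R₁, hR₁⟩ := eventually_atTop.1 (eventually_forall_le_of_gain k hk)
  have hgap := eventually_mul_rpow_le (show ρ < σ by linarith) (c := 20) (by norm_num)
    (show (0 : ℝ) < 1 / (16 * k) / 640000 by positivity)
  have hbig : ∀ᶠ r : ℝ in atTop, R₁ ≤ r ^ σ / 640000 :=
    ((tendsto_rpow_atTop (by linarith)).atTop_div_const (by norm_num)).eventually_ge_atTop _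
  have hBt : Tendsto (fun r : ℝ => Real.exp ((20 * r) ^ ρ)) atTop atTop :=
    Real.tendsto_exp_atTop.comp ((tendsto_rpow_atTop hρ0).comp
      (tendsto_id.const_mul_atTop (by norm_num)))
  have hBs : ∀ᶠ r : ℝ in atTop, Real.exp (-Real.exp ((20 * r) ^ ρ)) < ‖F y‖ :=
    (Real.tendsto_exp_neg_atTop_nhds_zero.comp hBt).eventually_lt_const (norm_pos_iff.2 hy)
  obtain ⟨r, ⟨w, hwr, hw⟩, hgr', hgap', hbig', hBy, hr1, hbr, hyr⟩ :=
    ((frequently_rpow_le_re_of_deriv_ne_zero hh hw₀ (show σ < 1 by linarith)).and_eventually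
      (((tendsto_id.const_mul_atTop (show (0 : ℝ) < 20 by norm_num)).eventually hgr).and
        (hgap.and (hbig.and (hBs.and ((eventually_ge_atTop 1).and
          ((eventually_ge_atTop ‖b‖).and (eventually_ge_atTop ‖y‖)))))))).exists
  have hr0 : 0 < r := by linarith
  have hrσ : 1 ≤ r ^ σ := Real.one_le_rpow hr1 (by linarith)
  obtain ⟨z₀, δ, hδ, hz₀, hδr, hAL, hAR, hLR, hd⟩ :=
    exists_almost_affine_disc hh hr0 hwr hbr (by linarith) hb
  set A := (h w).re with hA
  set L := deriv h z₀ with hL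
  set R := ‖L‖ * δ with hR
  set B := Real.exp ((20 * r) ^ ρ) with hB
  have hB1 : 1 ≤ B := Real.one_le_exp (Real.rpow_nonneg (by positivity) _)
  have hgrB : ∀ z ∈ closedBall (0 : ℂ) (20 * r), ‖F z‖ ≤ Real.exp B := hgr'
  have hRr : r ^ σ / 640000 ≤ R := by
    rw [div_le_iff₀ (by norm_num)]; linarith
  obtain ⟨hR1, hRe, hR5, hRk⟩ := hR₁ R (hbig'.trans hRr)
  have hA1 : 1 ≤ A := by linarith
  have hLpos : 0 < ‖L‖ := by
    by_contra hcon
    have : ‖L‖ = 0 := le_antisymm (not_lt.1 hcon) (norm_nonneg _)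
    rw [hR, this] at hR1
    linarith
  have hL0 : L ≠ 0 := norm_pos_iff.1 hLpos
  have hrδ : r / δ ≤ 6400000000 * R := by
    have h1 : r * ‖L‖ ≤ 6400000000 * R ^ 2 := by
      refine le_trans ?_ hLR
      nlinarith [mul_pos hr0 hLpos]
    have h2 : r / δ = r * ‖L‖ / R := by
      rw [hR]; field_simp
    rw [h2, div_le_iff₀ (by linarith)]
    linarith
  set p : ℂ := z₀ + (R / 2 : ℝ) / L with hp
  have hpz : dist p z₀ = δ / 2 := by
    rw [hp, dist_self_add_left, norm_div, Complex.norm_real, Real.norm_eq_abs,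
      abs_of_nonneg (by linarith), hR]
    field_simp
  have hpn : ‖p‖ ≤ ‖z₀‖ + δ / 2 := by
    rw [← hpz, dist_eq_norm]
    have := norm_add_le z₀ (p - z₀)
    rwa [add_sub_cancel] at this
  have hre : ∀ z ∈ closedBall p (δ / 8), R / 4 ≤ (h z).re := by
    intro z hz
    rw [mem_closedBall, dist_eq_norm] at hz
    set s := L * (z - z₀) with hs
    have h1 : ‖s - (R / 2 : ℝ)‖ ≤ R / 8 := by
      have : s - (R / 2 : ℝ) = L * (z - p) := by
        rw [hs, hp]; field_simp; ring
      rw [this, norm_mul, hR]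
      calc ‖L‖ * ‖z - p‖ ≤ ‖L‖ * (δ / 8) := by gcongr
        _ = _ := by ring
    have h2 : ‖s‖ ≤ 5 / 8 * R := by
      have := norm_add_le (s - (R / 2 : ℝ)) ((R / 2 : ℝ) : ℂ)
      rw [sub_add_cancel, Complex.norm_real, Real.norm_eq_abs, abs_of_nonneg (by linarith)] at this
      linarith
    have h3 := norm_rescale_sub_sub_le hh (p := z₀) (x := 0) (T := 5 / 8 * R) hδ hL0 hd (by simp)
      (by rw [← hR]; linarith) (s := s) (t := 0) (by simpa using h2) (by simp; linarith)
    have h4 : z₀ + s / L = z := by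
      rw [hs]; field_simp; ring
    simp only [h4, zero_div, add_zero, sub_zero, zero_add, ← hR] at h3
    have h5 : ‖h z - s - h z₀‖ ≤ R / 16 := by
      refine h3.trans ?_
      rw [div_mul_eq_mul_div, div_le_iff₀ (by linarith)]
      nlinarith
    have h6 := (abs_le.1 ((Complex.abs_re_le_norm _).trans h5)).1
    have h7 := (abs_le.1 ((Complex.abs_re_le_norm _).trans h1)).1
    simp only [Complex.sub_re, hz₀, Complex.ofReal_re] at h6 h7
    linarith
  set N := Real.exp (1 / (8 * k) * R) with hN
  have hN1 : 1 ≤ N := Real.one_le_exp (by positivity)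
  have hsmall : ∀ q ∈ closedBall p (δ / 16), ‖F q‖ ≤ Real.exp (B - N) := by
    intro q hq
    rw [mem_closedBall] at hq
    have hsub : closedBall q (δ / 16) ⊆ closedBall p (δ / 8) :=
      closedBall_subset_closedBall' (by linarith)
    obtain ⟨q', hq', hgrow⟩ := exists_exp_mul_norm_le_of_iteratedDeriv_eq hF (p := q)
      (ϱ := δ / 16) (N := ⌈N⌉₊) (G := Real.exp (1 / 4 * R)) (E := 0) (k := k)
      (g := fun z => Complex.exp (h z)) (e := fun _ => 0)
      (by positivity) (Nat.ceil_pos.2 (Real.exp_pos _)) (fun z _ => by simpa using hode z)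
      (fun z hz => by
        rw [Complex.norm_exp]
        refine Real.exp_le_exp.2 ?_
        linarith [hre z (hsub hz)])
      (fun z _ => by simp) (by
        refine le_trans ?_ hRk
        have h1 : (⌈N⌉₊ : ℝ) / (δ / 16) ≤ N * (32 * (1 / δ)) := by
          calc (⌈N⌉₊ : ℝ) / (δ / 16) ≤ (2 * N) / (δ / 16) := by
                gcongr
                linarith [Nat.ceil_lt_add_one (Real.exp_pos (1 / (8 * k) * R)).le]
            _ = _ := by field_simp; norm_num
        have h2 : 1 / δ ≤ 6400000000 * R := le_trans (by gcongr) hrδ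
        rw [mul_assoc 32]
        gcongr
        exact h1.trans (by gcongr)) (by
        rw [mul_zero]; positivity)
    have h3 : ‖F q'‖ ≤ Real.exp B := by
      refine hgrB q' ?_
      have := hsub hq'
      rw [mem_closedBall, dist_eq_norm] at this
      rw [mem_closedBall_zero_iff]
      have h4 := norm_add_le (q' - p) p
      rw [sub_add_cancel] at h4
      linarith [norm_nonneg z₀]
    rw [Real.exp_sub, le_div_iff₀ (Real.exp_pos _), mul_comm]
    refine le_trans ?_ (hgrow.trans h3)
    gcongr
    exact Nat.le_ceil _
  have he : Real.exp 1 < 3 := Real.exp_one_lt_three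
  have hyp : y ∈ closedBall p (5 * r) := by
    rw [mem_closedBall, dist_eq_norm]
    have := norm_sub_le y p
    linarith
  have h3c := norm_le_max_of_three_circles hF (c := p) (r₁ := δ / 16) (r₂ := 5 * r)
    (r₃ := 15 * r) (by positivity) (by linarith [norm_nonneg z₀]) (by nlinarith) hsmall
    (M := Real.exp B) (fun z hz => hgrB z (by
      rw [mem_closedBall, dist_eq_norm] at hz
      rw [mem_closedBall_zero_iff]
      have h4 := norm_add_le (z - p) p
      rw [sub_add_cancel] at h4
      linarith)) ⌈2 * B⌉₊ hyp
  set m := ⌈2 * B⌉₊ with hm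
  have hm1 : 2 * B ≤ m := Nat.le_ceil _
  have hm2 : (m : ℝ) ≤ 2 * B + 1 := (Nat.ceil_lt_add_one (by linarith)).le
  refine absurd hBy (not_lt.2 (h3c.trans (max_le ?_ ?_)))
  · have h1 : 5 * r / (δ / 16) ≤ Real.exp R := by
      have : 5 * r / (δ / 16) = 80 * (r / δ) := by field_simp; norm_num
      linarith
    have h2 : 5 * R * B ≤ N := by
      have h3 : (20 * r) ^ ρ ≤ 1 / (16 * k) * R := by
        refine hgap'.trans ?_
        rw [div_mul_eq_mul_div, mul_div_assoc]
        gcongr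
      calc 5 * R * B ≤ Real.exp (1 / (16 * k) * R) * Real.exp (1 / (16 * k) * R) := by
            gcongr
            exact Real.exp_le_exp.2 h3
        _ = N := by
          rw [hN, ← Real.exp_add]; congr 1; field_simp; norm_num
    calc Real.exp (B - N) * (5 * r / (δ / 16)) ^ m ≤ Real.exp (B - N) * Real.exp R ^ m := by
          gcongr
      _ = Real.exp (B - N + m * R) := by rw [← Real.exp_nat_mul, ← Real.exp_add]
      _ ≤ _ := by
        refine Real.exp_le_exp.2 ?_
        nlinarith
  · rw [← Real.exp_add]
    refine Real.exp_le_exp.2 ?_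
    linarith

end

/-- Theorem 1 (Brück conjecture for hyper-order less than one): if `f` is a nonconstant
entire function with `ρ₂(f) < 1` and `f`, `f⁽ᵏ⁾` share the finite value `a` CM (same zeros
of `f − a` and `f⁽ᵏ⁾ − a` with the same multiplicities), then `f⁽ᵏ⁾ − a = c(f − a)` for a
nonzero constant `c`. -/
theorem stmt_15 (f : ℂ → ℂ) (hf : Differentiable ℂ f)
    (hfnc : ∃ z w : ℂ, f z ≠ f w)
    (hρ : hyperOrder f < 1)
    (k : ℕ) (hk : 1 ≤ k) (a : ℂ)
    (hshare : ∀ z : ℂ, ∀ n : ℕ,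
      (VanishesToOrder (fun w => f w - a) z n ↔
        VanishesToOrder (fun w => iteratedDeriv k f w - a) z n)) :
    ∃ c : ℂ, c ≠ 0 ∧ ∀ z : ℂ, iteratedDeriv k f z - a = c * (f z - a) := by
  obtain ⟨y, hy⟩ : ∃ y, f y - a ≠ 0 := by
    by_contra! hcon
    obtain ⟨z, w, hzw⟩ := hfnc
    exact hzw (by rw [sub_eq_zero.1 (hcon z), sub_eq_zero.1 (hcon w)])
  have hF : Differentiable ℂ (fun w => f w - a) := hf.sub_const a
  have hG : Differentiable ℂ (fun w => iteratedDeriv k f w - a) := fun z =>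
    (hasDerivAt_iteratedDeriv hf k z).differentiableAt.sub_const a
  obtain ⟨h, hh, hfh⟩ := exists_eq_exp_mul_of_vanishesToOrder_iff hF hG hy hshare
  obtain ⟨ρ, hρ0, hρ1, hgr⟩ := exists_norm_sub_le_exp_exp_rpow hf hρ a
  have hode : ∀ z, iteratedDeriv k (fun w => f w - a) z
      = Complex.exp (h z) * (f z - a) + a := by
    intro z
    obtain ⟨j, rfl⟩ := Nat.exists_eq_succ_of_ne_zero (Nat.one_le_iff_ne_zero.1 hk)
    have : deriv (fun w => f w - a) = deriv f := funext fun w => deriv_sub_const a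
    rw [← hfh, iteratedDeriv_succ', this, ← iteratedDeriv_succ', sub_add_cancel]
  have hconst : ∀ w, deriv h w = 0 := by
    by_contra! hcon
    obtain ⟨w₀, hw₀⟩ := hcon
    obtain ⟨b, hb⟩ := exists_re_eq_zero hh hw₀
    rcases eq_or_ne a 0 with rfl | ha
    · exact not_of_iteratedDeriv_eq_exp_mul hF hh hk hy (fun z => by rw [hode, add_zero])
        hw₀ hb hρ0 hρ1 hgr
    by_cases haff : ∀ w, deriv h w = deriv h 0
    · have hα : deriv h 0 ≠ 0 := haff w₀ ▸ hw₀
      have hlin : ∀ z, h z = deriv h 0 * z + h 0 := by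
        intro z
        have hd : ∀ w, HasDerivAt (fun w => h w - deriv h 0 * w) 0 w := fun w => by
          have := (hh w).hasDerivAt.sub ((hasDerivAt_id w).const_mul (deriv h 0))
          rwa [haff w, mul_one, sub_self] at this
        have := is_const_of_deriv_eq_zero (fun w => (hd w).differentiableAt)
          (fun w => (hd w).deriv) z 0
        rw [mul_zero, sub_zero] at this
        linear_combination this
      refine not_of_iteratedDeriv_eq_exp_affine hF hk ha hα (β := h 0) (fun z => ?_) hρ0 hρ1 hgr
      rw [← hlin z]
      exact hode z
    · push Not at haff
      obtain ⟨w₁, hw₁⟩ := haff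
      exact not_of_iteratedDeriv_eq_exp_nonaffine hF hh hk ha hode hw₁ hb hρ0 hρ1 hgr
  refine ⟨Complex.exp (h 0), Complex.exp_ne_zero _, fun z => ?_⟩
  rw [hfh z, is_const_of_deriv_eq_zero hh hconst z 0]
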